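/- arXiv:1711.02777 — 12 statements merged into one kernel-verified Lean document; each statement's English description precedes it below -/
import Mathlib

section
/- Fix an even integer q ≥ 0 and integers k, n, d with 0 ≤ q < 2k ≤ n and d ≥ 1. Assume one of the following holds: (1) n is even, 2k ≤ n−2, and d ≥ n−2; (2) n is odd, 2k ≤ n−2, and d ≥ n−3; (3) n is even, 2k = n, and q = 2k−2; (4) n is odd, 2k = n−1, q = 2k−2, and d ≥ n−3. Then R_{q,k,n,d} = dk − 1 + q(k − q/2 − 1). -/
/-- `IsPart k y`: `y` encodes a partition with at most `k` parts (1-indexed),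
with `y i = 0` for `i = 0` and for `i > k`. -/
def IsPart (k : ℕ) (y : ℕ → ℤ) : Prop :=
  (∀ i, 1 ≤ i → i < k → y (i + 1) ≤ y i) ∧
  (∀ i, 1 ≤ i → i ≤ k → 0 ≤ y i) ∧
  (∀ i, i = 0 ∨ k < i → y i = 0)

/-- `IsPartE k y`: `y` belongs to `P_e(k)`: a partition with at most `k` parts,
with `y_{2i} = y_{2i-1}` for `1 ≤ i ≤ ⌊k/2⌋`, and `y_k = 0` if `k` is odd. -/
def IsPartE (k : ℕ) (y : ℕ → ℤ) : Prop :=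
  IsPart k y ∧ (∀ i, 1 ≤ i → 2 * i ≤ k → y (2 * i) = y (2 * i - 1)) ∧ (Odd k → y k = 0)

/-- The size `|y|` of a partition with at most `k` parts. -/
def psize (k : ℕ) (y : ℕ → ℤ) : ℤ := ∑ i ∈ Finset.Icc 1 k, y i

/-- The set `𝒴𝒰(q,k,n,d)` of pairs of partitions `(y,u) ∈ P_e(n-q) × P(n-q)` with
`|y| ≤ d(2k-q)-2`, `|y| - 2y₁ ≥ d(2k-q-2)`, all `u_i` even, `u₁ = q`, and
`y_i - y_{i+1} ≥ u_i - u_{i+1}` for `1 ≤ i ≤ n-q-1`. -/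
def YU (q k n d : ℕ) : Set ((ℕ → ℤ) × (ℕ → ℤ)) :=
  { p | IsPartE (n - q) p.1 ∧ IsPart (n - q) p.2 ∧
    psize (n - q) p.1 ≤ (d : ℤ) * (2 * (k : ℤ) - (q : ℤ)) - 2 ∧
    (d : ℤ) * (2 * (k : ℤ) - (q : ℤ) - 2) ≤ psize (n - q) p.1 - 2 * p.1 1 ∧
    (∀ i, Even (p.2 i)) ∧ p.2 1 = (q : ℤ) ∧
    (∀ i, 1 ≤ i → i ≤ n - q - 1 → p.2 i - p.2 (i + 1) ≤ p.1 i - p.1 (i + 1)) }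

/-- The function `g_{q,k,n,d}` (which depends only on `q` and `n`):
`g(y,u) = |y|/2 + |u|/2 + q(y₁-1)/2 - Σ_{i=1}^{n-q-1} (u_{i+1}/2)((y_i-y_{i+1})-(u_i-u_{i+1}))`. -/
def gfun (q n : ℕ) (p : (ℕ → ℤ) × (ℕ → ℤ)) : ℚ :=
  (psize (n - q) p.1 : ℚ) / 2 + (psize (n - q) p.2 : ℚ) / 2
    + (q : ℚ) * ((p.1 1 : ℚ) - 1) / 2
    - ∑ i ∈ Finset.Icc 1 (n - q - 1),
        ((p.2 (i + 1) : ℚ) / 2) *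
          (((p.1 i : ℚ) - (p.1 (i + 1) : ℚ)) - ((p.2 i : ℚ) - (p.2 (i + 1) : ℚ)))



open Finset in
lemma K_sum_le (p j : ℕ) (t : ℕ → ℤ) (hj : j < p) (hmono : ∀ a b, a ≤ b → b ≤ p → t a ≤ t b) :
    ∑ l ∈ range (p+1), t l ≤ ((j:ℤ)+1) * t j + ((p:ℤ)-j) * t p := by
  have h1 : ∑ l ∈ range (p+1), t l ≤ ∑ l ∈ range (p+1), (if l < j+1 then t j else t p) := by
    apply Finset.sum_le_sum
    intro l hl
    have hl' := Finset.mem_range.1 hl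
    split_ifs with h
    · exact hmono _ _ (by omega) (by omega)
    · exact hmono _ _ (by omega) (by omega)
  obtain ⟨c, rfl⟩ : ∃ c, p = j + c := ⟨p - j, by omega⟩
  rw [show j + c + 1 = (j+1) + c by ring, Finset.sum_range_add (fun l => if l < j+1 then t j else t (j+c))] at h1
  have e1 : ∑ l ∈ range (j+1), (if l < j+1 then t j else t (j+c)) = ((j:ℤ)+1) * t j := by
    rw [Finset.sum_congr rfl (g := fun _ => t j)]
    · simp
    · intro x hx; rw [if_pos (Finset.mem_range.1 hx)]
  have e2 : ∑ l ∈ range c, (if j+1+l < j+1 then t j else t (j+c)) = (c:ℤ) * t (j+c) := by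
    rw [Finset.sum_congr rfl (g := fun _ => t (j+c))]
    · simp
    · intro x hx; rw [if_neg (by omega)]
  rw [e1, e2] at h1
  rw [show j + c + 1 = (j+1) + c by ring]
  push_cast
  linarith

open Finset in
lemma K1 (p s : ℕ) (q d : ℤ) (b t : ℕ → ℤ) (hsp : s ≤ p)
    (hb : ∀ j, 0 ≤ b j) (hbp : 2 ≤ b p) (ht0 : ∀ j, j ≤ p → 0 ≤ t j)
    (hmono : ∀ a b, a ≤ b → b ≤ p → t a ≤ t b)
    (hd : q + 2 * p ≤ d)
    (A : d * ((p:ℤ)+1-s) - p ≤ ∑ l ∈ range (p+1), t l + (((p:ℤ)+1-s) * (q - b p) - ∑ j ∈ range p, b j * ((j:ℤ)+1-s)))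
    (B : t p ≤ d - 1 - q + b p) :
    0 ≤ ∑ j ∈ range p, b j * (t j - 2 * ((j:ℤ)+1-s)) := by
  set G := ∑ j ∈ range p, b j * ((j:ℤ)+1-s) with hG
  have hsplit : ∑ j ∈ range p, b j * (t j - 2 * ((j:ℤ)+1-s)) = ∑ j ∈ range p, b j * t j - 2 * G := by
    rw [hG, Finset.mul_sum, ← Finset.sum_sub_distrib]
    exact Finset.sum_congr rfl fun _ _ => by ring
  by_cases hG0 : G ≤ 0
  · have : 0 ≤ ∑ j ∈ range p, b j * t j :=
      Finset.sum_nonneg fun j hj => mul_nonneg (hb j) (ht0 j (Finset.mem_range.1 hj).le)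
    linarith
  · apply Finset.sum_nonneg
    intro j hj
    have hjp := Finset.mem_range.1 hj
    apply mul_nonneg (hb j)
    by_contra hcon
    have hS := K_sum_le p j t hjp hmono
    have h0 := ht0 j hjp.le
    have ha : (1:ℤ) ≤ (j:ℤ)+1-s := by omega
    have hm : (1:ℤ) ≤ (p:ℤ) - j := by omega
    obtain ⟨a, ha'⟩ : ∃ a : ℤ, a = (j:ℤ)+1-s := ⟨_, rfl⟩
    obtain ⟨m, hm'⟩ : ∃ m : ℤ, m = (p:ℤ)-j := ⟨_, rfl⟩
    have e1 : (p:ℤ)+1-s = m + a := by omega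
    rw [e1] at A
    rw [← hm'] at hS hm
    rw [← ha'] at ha hcon
    have h1 : ((j:ℤ)+1) * t j ≤ ((j:ℤ)+1) * (2*a-1) := mul_le_mul_of_nonneg_left (by omega) (by omega)
    have h2 : m * t p ≤ m * (d-1-q+b p) := mul_le_mul_of_nonneg_left B (by omega)
    have h3 : a * (2*p+2) ≤ a * (d - q + b p) := mul_le_mul_of_nonneg_left (by omega) (by omega)
    have h4 : a * j ≤ a * p := mul_le_mul_of_nonneg_left (by omega) (by omega)
    have hp : (p:ℤ) = m + j := by omega
    push Not at hG0
    nlinarith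

open Finset in
lemma K2 (p s : ℕ) (q d : ℤ) (b t : ℕ → ℤ) (hsp : s ≤ p)
    (hb : ∀ j, 0 ≤ b j) (hbp : 2 ≤ b p) (ht0 : ∀ j, j ≤ p → 0 ≤ t j)
    (hmono : ∀ a b, a ≤ b → b ≤ p → t a ≤ t b)
    (hd : q + 2 * p ≤ d)
    (A : d * ((p:ℤ)+1-s) - p ≤ ∑ l ∈ range (p+1), t l + (((p:ℤ)+1-s) * (q - b p) - ∑ j ∈ range p, b j * ((j:ℤ)+1-s)))
    (B : t p < 2 * ((p:ℤ)+1-s)) :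
    0 ≤ ∑ j ∈ range (p+1), b j * (t j - 2 * ((j:ℤ)+1-s)) := by
  set G := ∑ j ∈ range p, b j * ((j:ℤ)+1-s) with hG
  have hsplit : ∑ j ∈ range p, b j * (t j - 2 * ((j:ℤ)+1-s)) = ∑ j ∈ range p, b j * t j - 2 * G := by
    rw [hG, Finset.mul_sum, ← Finset.sum_sub_distrib]
    exact Finset.sum_congr rfl fun _ _ => by ring
  have h0 : 0 ≤ ∑ j ∈ range p, b j * t j :=
      Finset.sum_nonneg fun j hj => mul_nonneg (hb j) (ht0 j (Finset.mem_range.1 hj).le)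
  have hS : ∑ l ∈ range (p+1), t l ≤ ((p:ℤ)+1) * t p := by
    have := Finset.sum_le_card_nsmul (range (p+1)) t (t p)
      (fun l hl => hmono l p (by have := Finset.mem_range.1 hl; omega) le_rfl)
    simpa using this
  rw [Finset.sum_range_succ, hsplit]
  obtain ⟨e, he⟩ : ∃ e : ℤ, e = (p:ℤ)+1-s := ⟨_, rfl⟩
  have hep : 1 ≤ e := by omega
  rw [← he] at A B ⊢
  have htp := ht0 p le_rfl
  have h1 : e * (2*p) ≤ e * (d - q) := mul_le_mul_of_nonneg_left (by omega) (by omega)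
  have h2 : 0 ≤ (p:ℤ) * (2*e-1-t p) := mul_nonneg (by omega) (by omega)
  have h3 : 0 ≤ (b p - 2) * t p := mul_nonneg (by omega) (by omega)
  nlinarith

open Finset in
lemma abel1 (U : ℕ → ℤ) (N : ℕ) :
    ∑ j ∈ range N, (U j - U (j+1)) * ((j:ℤ)+1) = ∑ j ∈ range N, U j - N * U N := by
  induction N with
  | zero => simp
  | succ N ih => rw [Finset.sum_range_succ, ih, Finset.sum_range_succ]; push_cast; ring

open Finset in
theorem core (r s : ℕ) (q d V : ℤ) (Y U : ℕ → ℤ) (hs : 1 ≤ s) (hr : 1 ≤ r)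
    (hU0 : U 0 = q) (hUr : ∀ j, r ≤ j → U j = 0) (hUev : ∀ j, Even (U j))
    (hUanti : ∀ j, U (j+1) ≤ U j) (hY : ∀ j, 0 ≤ Y j)
    (hslope : ∀ j, j + 1 < r → U j - U (j+1) ≤ Y j - Y (j+1))
    (hY0 : Y 0 ≤ d - 1) (hsum : ∑ j ∈ range r, Y j ≤ d * s - 1)
    (hV : V = 0 ∨ (2 ≤ V ∧ V ≤ U (r-1) ∧ U (r-1) - V ≤ Y (r-1) ∧ q + 2 * r - 2 ≤ d))
    (hd : s < r → q + 2 * r - 2 ≤ d) :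
    V * (1 - (Y (r-1) - U (r-1) + V)) ≤
      ∑ j ∈ range r, (U j - U (j+1)) * ((d - 1 - q + U j - Y j) - 2 * ((j:ℤ)+1-s)) := by
  have hanti : Antitone U := antitone_nat_of_succ_le hUanti
  have hUnn : ∀ j, 0 ≤ U j := fun j => by
    have := hanti (show j ≤ j + r by omega)
    rw [hUr (j+r) (by omega)] at this; exact this
  rcases (hUnn 0).eq_or_lt with hq0 | hq0
  · have hz : ∀ j, U j = 0 := fun j => le_antisymm (by have := hanti (Nat.zero_le j); omega) (hUnn j)
    have : V = 0 := by
      rcases hV with h | h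
      · exact h
      · have := hz (r-1); omega
    simp [hz, this]
  have hex : ∃ N, U N ≤ 0 := ⟨r, (hUr r le_rfl).le⟩
  obtain ⟨p, hp1, hp2⟩ : ∃ p, 0 < U p ∧ U (p+1) ≤ 0 := by
    classical
    have h1 := Nat.find_spec hex
    have h2 : Nat.find hex ≠ 0 := by intro h; rw [h] at h1; omega
    refine ⟨Nat.find hex - 1, ?_, ?_⟩
    · have := Nat.find_min hex (m := Nat.find hex - 1) (by omega)
      omega
    · rwa [Nat.sub_add_cancel (by omega)]
  have hUp : 2 ≤ U p := by
    obtain ⟨c, hc⟩ := hUev p; omega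
  have hz : ∀ j, p < j → U j = 0 := fun j hj =>
    le_antisymm (le_trans (hanti (show p+1 ≤ j from hj)) hp2) (hUnn j)
  have hpr : p < r := by
    by_contra h; have := hUr p (by omega); omega
  set t : ℕ → ℤ := fun j => d - 1 - q + U j - Y j with ht
  set b : ℕ → ℤ := fun j => U j - U (j+1) with hbdef
  have hb : ∀ j, 0 ≤ b j := fun j => by have := hUanti j; simp only [hbdef]; omega
  have hbpe : b p = U p := by simp only [hbdef]; rw [hz (p+1) (by omega)]; ring
  have hbp : 2 ≤ b p := by omega
  have hmono : ∀ a c, a ≤ c → c ≤ p → t a ≤ t c := by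
    intro a c hac
    induction c, hac using Nat.le_induction with
    | base => intro _; exact le_rfl
    | succ c hac ih =>
      intro hc
      refine le_trans (ih (by omega)) ?_
      have := hslope c (by omega)
      simp only [ht]; omega
  have ht0 : ∀ j, j ≤ p → 0 ≤ t j := fun j hj => by
    refine le_trans ?_ (hmono 0 j (by omega) hj)
    simp only [ht]; omega
  have hred : ∑ j ∈ range r, (U j - U (j+1)) * ((d - 1 - q + U j - Y j) - 2 * ((j:ℤ)+1-s))
      = ∑ j ∈ range (p+1), b j * (t j - 2 * ((j:ℤ)+1-s)) := by
    symm
    apply Finset.sum_subset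
    · intro x hx; simp only [Finset.mem_range] at *; omega
    · intro x hx hx'
      simp only [Finset.mem_range] at *
      simp [hbdef, hz x (by omega), hz (x+1) (by omega)]
  rw [hred]
  have hB : t p ≤ d - 1 - q + b p := by
    have := hY p; rw [hbpe]; simp only [ht]; omega
  have hA : d * ((p:ℤ)+1-s) - p ≤ ∑ l ∈ range (p+1), t l + (((p:ℤ)+1-s) * (q - b p) - ∑ j ∈ range p, b j * ((j:ℤ)+1-s)) := by
    have h1 : ∑ j ∈ range (p+1), Y j ≤ d * s - 1 := by
      refine le_trans ?_ hsum
      apply Finset.sum_le_sum_of_subset_of_nonneg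
      · intro x hx; simp only [Finset.mem_range] at *; omega
      · intro i _ _; exact hY i
    have h2 := abel1 U (p+1)
    rw [hz (p+1) (by omega)] at h2
    have h3 : ∑ j ∈ range (p+1), b j = q := by
      have := Finset.sum_range_sub' U (p+1)
      rw [hz (p+1) (by omega), hU0] at this
      simp only [hbdef]; rw [this]; ring
    have h4 : ∑ j ∈ range (p+1), b j * ((j:ℤ)+1-s) = ∑ j ∈ range (p+1), U j - s * q := by
      rw [← h3, Finset.mul_sum, ← sub_eq_zero]
      have : ∑ j ∈ range (p+1), U j = ∑ j ∈ range (p+1), b j * ((j:ℤ)+1) := by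
        rw [h2]; ring
      rw [this, ← Finset.sum_sub_distrib, ← Finset.sum_sub_distrib]
      apply Finset.sum_eq_zero; intros; ring
    have h5 : ∑ l ∈ range (p+1), t l = ((p:ℤ)+1) * (d-1-q) + ∑ j ∈ range (p+1), U j - ∑ j ∈ range (p+1), Y j := by
      simp only [ht, Finset.sum_sub_distrib, Finset.sum_add_distrib]
      simp
      ring
    rw [Finset.sum_range_succ (fun j => b j * ((j:ℤ)+1-s))] at h4
    rw [h5]
    nlinarith
  -- small part lemma
  have hsmall : p < s → ∀ N, N ≤ p + 1 → 0 ≤ ∑ j ∈ range N, b j * (t j - 2 * ((j:ℤ)+1-s)) := by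
    intro hps N hN
    apply Finset.sum_nonneg
    intro j hj
    have := Finset.mem_range.1 hj
    apply mul_nonneg (hb j)
    have := ht0 j (by omega)
    omega
  have hgen : (2 * ((p:ℤ)+1-s) ≤ t p) → 0 ≤ ∑ j ∈ range p, b j * (t j - 2 * ((j:ℤ)+1-s)) := by
    intro h
    by_cases hps : p < s
    · exact hsmall hps p (by omega)
    · have := hd (by omega)
      exact K1 p s q d b t (by omega) hb hbp ht0 hmono (by omega) hA hB
  have hnonneg : 0 ≤ ∑ j ∈ range (p+1), b j * (t j - 2 * ((j:ℤ)+1-s)) := by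
    by_cases hps : p < s
    · exact hsmall hps _ le_rfl
    · by_cases h : 2 * ((p:ℤ)+1-s) ≤ t p
      · rw [Finset.sum_range_succ]
        exact add_nonneg (hgen h) (mul_nonneg (hb p) (by omega))
      · have := hd (by omega)
        exact K2 p s q d b t (by omega) hb hbp ht0 hmono (by omega) hA (by omega)
  rcases hV with hV | ⟨hV2, hVU, hVw, hdd⟩
  · rw [hV]; simpa using hnonneg
  · by_cases hw : 1 ≤ Y (r-1) - U (r-1) + V
    · refine le_trans ?_ hnonneg
      exact mul_nonpos_of_nonneg_of_nonpos (by omega) (by omega)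
    · have hpe : r - 1 = p := by
        by_contra h
        have := hz (r-1) (by omega)
        omega
      rw [hpe] at hVU hVw hw ⊢
      have htp : t p = d - 1 - q + V := by simp only [ht]; omega
      have h1 := hgen (by rw [htp]; omega)
      rw [Finset.sum_range_succ]
      have h2 : b p * (V - 1) ≤ b p * (t p - 2 * ((p:ℤ)+1-s)) :=
        mul_le_mul_of_nonneg_left (by rw [htp]; omega) (hb p)
      have h3 : Y p - U p + V = 0 := by omega
      rw [h3]
      nlinarith

open Finset in
lemma abel2 (U Y : ℕ → ℤ) (r : ℕ) :
    ∑ j ∈ range r, (2 * U j - U (j+1) * ((Y j - Y (j+1)) - (U j - U (j+1)))) =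
    ∑ j ∈ range r, (U j - U (j+1)) * (2 * ((j:ℤ)+1) + Y j - U j)
      - U 0 * Y 0 + U 0 ^ 2 + (2 * r * U r + U r * Y r - U r ^ 2) := by
  induction r with
  | zero => simp
  | succ N ih => rw [Finset.sum_range_succ, ih, Finset.sum_range_succ]; push_cast; ring

open Finset in
lemma fold2 (y : ℕ → ℤ) (r : ℕ) :
    ∑ i ∈ Icc 1 (2*r), y i = ∑ j ∈ range r, (y (2*j+1) + y (2*j+2)) := by
  induction r with
  | zero => simp
  | succ N ih =>
    rw [Finset.sum_range_succ, ← ih, show 2*(N+1) = 2*N+1+1 by ring,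
      Finset.sum_Icc_succ_top (by omega), Finset.sum_Icc_succ_top (by omega)]
    ring

lemma gfun_int (q n : ℕ) (p : (ℕ → ℤ) × (ℕ → ℤ)) :
    gfun q n p = (((psize (n-q) p.1 + psize (n-q) p.2 + q * (p.1 1 - 1)
      - ∑ i ∈ Finset.Icc 1 (n-q-1), p.2 (i+1) * ((p.1 i - p.1 (i+1)) - (p.2 i - p.2 (i+1))) : ℤ)) : ℚ) / 2 := by
  unfold gfun
  push_cast
  rw [sub_div, Finset.sum_div, add_div, add_div]
  congr 1
  apply Finset.sum_congr rfl; intros; ring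

open Finset in
theorem ub (a s m d r : ℕ) (hm : m = 2*r ∨ m = 2*r+1) (hs : 1 ≤ s) (hsr : s ≤ r)
    (hd1 : s < r → 2*a+2*r-2 ≤ d) (hd2 : m = 2*r+1 → 2*a+2*r-2 ≤ d)
    (p : (ℕ → ℤ) × (ℕ → ℤ)) (hp : p ∈ YU (2*a) (a+s) (2*a+m) d) :
    psize m p.1 + psize m p.2 + (2*a:ℤ) * (p.1 1 - 1)
      - ∑ i ∈ Finset.Icc 1 (m-1), p.2 (i+1) * ((p.1 i - p.1 (i+1)) - (p.2 i - p.2 (i+1)))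
      ≤ d * (2*s+2*a) - 2 + 2*a*(2*s-2) := by
  obtain ⟨y, u⟩ := p
  obtain ⟨⟨⟨hy1, hy2, hy3⟩, hyp, hyo⟩, ⟨hu1, hu2, hu3⟩, hA, hB, hev, hu0, hsl⟩ := hp
  simp only [show 2*a+m-2*a = m by omega] at *
  push_cast at hA hB hu0
  have hpair : ∀ j, j < r → y (2*j+2) = y (2*j+1) := fun j hj => by
    have := hyp (j+1) (by omega) (by omega)
    rwa [show 2*(j+1)-1 = 2*j+1 by omega, show 2*(j+1) = 2*j+2 by ring] at this
  have hupair : ∀ j, j < r → u (2*j+2) = u (2*j+1) := fun j hj => by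
    have h1 := hsl (2*j+1) (by omega) (by omega)
    have h2 := hu1 (2*j+1) (by omega) (by omega)
    have h3 := hpair j hj
    rw [show 2*j+1+1 = 2*j+2 by ring] at *
    omega
  have hylast : y (2*r+1) = 0 := by
    rcases hm with h | h
    · exact hy3 _ (by omega)
    · have := hyo ⟨r, h⟩; rwa [h] at this
  have hyext : ∀ i, 2*r < i → y i = 0 := fun i hi => by
    rcases eq_or_ne i (2*r+1) with h | h
    · rw [h]; exact hylast
    · exact hy3 _ (by omega)
  have huext : ∀ i, 2*r+1 < i → u i = 0 := fun i hi => hu3 _ (by omega)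
  have hynn : ∀ i, 0 ≤ y i := fun i => by
    by_cases h : i = 0 ∨ m < i
    · exact (hy3 i h).ge
    · exact hy2 i (by omega) (by omega)
  have hunn : ∀ i, 0 ≤ u i := fun i => by
    by_cases h : i = 0 ∨ m < i
    · exact (hu3 i h).ge
    · exact hu2 i (by omega) (by omega)
  set Y : ℕ → ℤ := fun j => y (2*j+2) with hYd
  set U : ℕ → ℤ := fun j => u (2*j+2) with hUd
  set V : ℤ := u (2*r+1) with hVd
  have hpsy : psize m y = 2 * ∑ j ∈ range r, Y j := by
    have : psize m y = ∑ i ∈ Icc 1 (2*r), y i := by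
      unfold psize
      rcases hm with h | h
      · rw [h]
      · rw [h, Finset.sum_Icc_succ_top (by omega), hylast, add_zero]
    rw [this, fold2, Finset.mul_sum]
    apply Finset.sum_congr rfl
    intro j hj
    have := hpair j (Finset.mem_range.1 hj)
    simp only [hYd]; omega
  have hpsu : psize m u = 2 * ∑ j ∈ range r, U j + V := by
    have : psize m u = ∑ i ∈ Icc 1 (2*r), u i + V := by
      unfold psize
      rcases hm with h | h
      · rw [h, hVd, hu3 (2*r+1) (by omega), add_zero]
      · rw [h, Finset.sum_Icc_succ_top (by omega)]
    rw [this, fold2, Finset.mul_sum]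
    congr 1
    apply Finset.sum_congr rfl
    intro j hj
    have := hupair j (Finset.mem_range.1 hj)
    simp only [hUd]; omega
  have hS : ∑ i ∈ Finset.Icc 1 (m-1), u (i+1) * ((y i - y (i+1)) - (u i - u (i+1)))
      = ∑ j ∈ range r, U (j+1) * ((Y j - Y (j+1)) - (U j - U (j+1))) + V * (Y (r-1) - U (r-1) + V) := by
    have h1 : ∑ i ∈ Finset.Icc 1 (m-1), u (i+1) * ((y i - y (i+1)) - (u i - u (i+1)))
       = ∑ i ∈ Finset.Icc 1 (2*r), u (i+1) * ((y i - y (i+1)) - (u i - u (i+1))) := by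
      rcases hm with h | h
      · rw [show 2*r = (2*r-1)+1 by omega, Finset.sum_Icc_succ_top (by omega),
          show 2*r-1+1 = 2*r by omega, hu3 (2*r+1) (by omega), h]
        ring
      · rw [h]; rfl
    rw [h1, fold2]
    obtain ⟨c, rfl⟩ : ∃ c, r = c+1 := ⟨r-1, by omega⟩
    rw [Finset.sum_range_succ, Finset.sum_range_succ]
    have e1 : ∑ j ∈ range c, (u (2*j+1+1) * ((y (2*j+1) - y (2*j+1+1)) - (u (2*j+1) - u (2*j+1+1)))
        + u (2*j+2+1) * ((y (2*j+2) - y (2*j+2+1)) - (u (2*j+2) - u (2*j+2+1)))) =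
        ∑ j ∈ range c, U (j+1) * ((Y j - Y (j+1)) - (U j - U (j+1))) := by
      apply Finset.sum_congr rfl
      intro j hj
      have hj' := Finset.mem_range.1 hj
      have a1 := hpair j (by omega)
      have a2 := hupair j (by omega)
      have a3 := hpair (j+1) (by omega)
      have a4 := hupair (j+1) (by omega)
      simp only [hYd, hUd]
      rw [show 2*j+1+1 = 2*j+2 by ring, show 2*j+2+1 = 2*(j+1)+1 by ring, a3, a4, a1, a2]
      ring
    rw [e1]
    have a1 := hpair c (by omega)
    have a2 := hupair c (by omega)
    have a3 : U (c+1) = 0 := huext _ (by omega)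
    have a4 : y (2*c+2+1) = 0 := hyext _ (by omega)
    have a5 : u (2*c+2+1) = V := rfl
    rw [a3, a4, a5, show 2*c+1+1 = 2*c+2 by ring, a1, a2, show c+1-1 = c by omega]
    simp only [hYd, hUd]
    rw [a1, a2]
    ring
  have hU0 : U 0 = 2*a := by rw [← hu0]; exact hupair 0 (by omega)
  have hy0 : y 1 = Y 0 := (hpair 0 (by omega)).symm
  have hUr : ∀ j, r ≤ j → U j = 0 := fun j hj => huext _ (by omega)
  have hab := abel2 U Y r
  rw [hUr r le_rfl, Finset.sum_sub_distrib, ← Finset.mul_sum, hU0] at hab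
  rw [hpsy, hy0] at hB
  rw [hpsy] at hA
  have hsum : ∑ j ∈ range r, Y j ≤ (d:ℤ) * s - 1 := by nlinarith
  have hcore := core r s (2*a) d V Y U hs (by omega) hU0 hUr (fun j => hev _)
    (fun j => by
      simp only [hUd]
      by_cases hj : j + 1 < r
      · have h1 := hu1 (2*j+2) (by omega) (by omega)
        have h2 := hupair (j+1) (by omega)
        rw [show 2*j+2+1 = 2*(j+1)+1 by ring] at h1
        omega
      · rw [huext (2*(j+1)+2) (by omega)]; exact hunn _)
    (fun j => hynn _)
    (fun j hj => by
      have h1 := hsl (2*j+2) (by omega) (by omega)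
      have h2 := hupair (j+1) (by omega)
      have h3 := hpair (j+1) (by omega)
      rw [show 2*j+2+1 = 2*(j+1)+1 by ring] at h1
      simp only [hUd, hYd]
      omega)
    (by nlinarith) hsum
    (by
      rcases hm with h | h
      · left; exact hu3 _ (by omega)
      · have h0 := hunn (2*r+1)
        have h1 := hev (2*r+1)
        rcases h0.eq_or_lt with h2 | h2
        · left; exact h2.symm
        · right
          have h3 := hu1 (2*r) (by omega) (by omega)
          have h4 := hsl (2*r) (by omega) (by omega)
          have h5 := hd2 h
          rw [hylast] at h4
          simp only [hUd, hYd]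
          rw [show 2*(r-1)+2 = 2*r by omega]
          obtain ⟨c, hc⟩ := h1
          refine ⟨by omega, by omega, by omega, by omega⟩)
    (fun h => by have := hd1 h; omega)
  have hexp : ∑ j ∈ range r, (U j - U (j+1)) * (((d:ℤ) - 1 - 2*a + U j - Y j) - 2 * ((j:ℤ)+1-s))
     = ((d:ℤ) - 1 - 2*a + 2*s) * (2*a) - ∑ j ∈ range r, (U j - U (j+1)) * (2 * ((j:ℤ)+1) + Y j - U j) := by
    have h3 : ∑ j ∈ range r, (U j - U (j+1)) = 2*a := by
      rw [Finset.sum_range_sub', hUr r le_rfl, hU0]; ring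
    rw [eq_sub_iff_add_eq, ← Finset.sum_add_distrib, ← h3, Finset.mul_sum]
    apply Finset.sum_congr rfl; intros; ring
  rw [hexp] at hcore
  show psize m y + psize m u + (2*a:ℤ) * (y 1 - 1)
      - ∑ i ∈ Finset.Icc 1 (m-1), u (i+1) * ((y i - y (i+1)) - (u i - u (i+1))) ≤ _
  rw [hpsy, hpsu, hS, hy0]
  linarith

open Finset in
lemma sum_step (s m : ℕ) (c : ℤ) (f : ℕ → ℤ) (hm : 2*s ≤ m) (hf : ∀ i, 1 ≤ i → i ≤ 2*s → f i = c) :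
    ∑ i ∈ Icc 1 m, f i = 2*s*c + ∑ i ∈ Icc (2*s+1) m, f i := by
  have h : ∑ i ∈ Icc 1 m, f i = ∑ i ∈ Icc 1 (2*s), f i + ∑ i ∈ Icc (2*s+1) m, f i := by
    rw [← Finset.sum_union]
    · congr 1; ext x; simp only [mem_union, mem_Icc]; omega
    · rw [Finset.disjoint_left]; intro x; simp only [mem_Icc]; omega
  rw [h, Finset.sum_congr rfl (g := fun _ => c)]
  · simp
  · intro x hx; rw [mem_Icc] at hx; exact hf x hx.1 hx.2

open Finset in
theorem exA (a s m d r : ℕ) (hm : m = 2*r ∨ m = 2*r+1) (hs : 1 ≤ s) (hsr : s ≤ r) (hd : 1 ≤ d)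
    (hc : s < r ∨ s = 1) (hd1 : 2*s < m → 2*a+s ≤ d) :
    ∃ p ∈ YU (2*a) (a+s) (2*a+m) d,
    psize m p.1 + psize m p.2 + (2*a:ℤ) * (p.1 1 - 1)
      - ∑ i ∈ Finset.Icc 1 (m-1), p.2 (i+1) * ((p.1 i - p.1 (i+1)) - (p.2 i - p.2 (i+1)))
      = d * (2*s+2*a) - 2 + 2*a*(2*s-2) := by
  set y : ℕ → ℤ := fun i => if i = 0 then 0 else if i ≤ 2*s then (d:ℤ)-1 else
    if i ≤ 2*s+2 then (s:ℤ)-1 else 0 with hy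
  set u : ℕ → ℤ := fun i => if i = 0 then 0 else if i ≤ 2*s then 2*(a:ℤ) else 0 with hu
  have py : psize m y = 2*s*((d:ℤ)-1) + 2*((s:ℤ)-1) := by
    unfold psize
    rw [sum_step s m ((d:ℤ)-1) y (by omega) (fun i h1 h2 => by
      simp only [hy]; rw [if_neg (by omega), if_pos h2])]
    congr 1
    by_cases h : s < r
    · rw [← Finset.sum_subset (s₁ := {2*s+1, 2*s+2})]
      · rw [Finset.sum_pair (by omega)]
        simp only [hy]
        rw [if_neg (by omega), if_neg (by omega), if_pos (by omega),
          if_neg (by omega), if_neg (by omega), if_pos (by omega)]; ring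
      · intro x; simp only [mem_insert, mem_singleton, mem_Icc]; omega
      · intro x; simp only [mem_insert, mem_singleton, mem_Icc, hy]
        intro h1 h2
        rw [if_neg (by omega), if_neg (by omega), if_neg (by omega)]
    · have : s = 1 := by omega
      subst this
      simp only [Nat.cast_one, sub_self, mul_zero]
      apply Finset.sum_eq_zero
      intro x; simp only [mem_Icc, hy]
      intro h1
      rw [if_neg (by omega), if_neg (by omega)]; simp
  have pu : psize m u = 2*s*(2*(a:ℤ)) := by
    unfold psize
    rw [sum_step s m (2*(a:ℤ)) u (by omega) (fun i h1 h2 => by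
      simp only [hu]; rw [if_neg (by omega), if_pos h2])]
    rw [Finset.sum_eq_zero, add_zero]
    intro x; simp only [mem_Icc, hu]
    intro h1
    rw [if_neg (by omega), if_neg (by omega)]
  have y1 : y 1 = (d:ℤ)-1 := by simp only [hy]; rw [if_neg (by omega), if_pos (by omega)]
  have u1 : u 1 = 2*(a:ℤ) := by simp only [hu]; rw [if_neg (by omega), if_pos (by omega)]
  have hsd : 2*s < m ∨ s = 1 := by omega
  refine ⟨(y, u), ⟨⟨⟨?_, ?_, ?_⟩, ?_, ?_⟩, ⟨?_, ?_, ?_⟩, ?_, ?_, ?_, ?_, ?_⟩, ?_⟩ <;>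
    simp only [show 2*a+m-2*a = m by omega]
  · intro i h1 h2; simp only [hy]; split_ifs <;> omega
  · intro i h1 h2; simp only [hy]; split_ifs <;> omega
  · intro i h1; simp only [hy]; split_ifs <;> omega
  · intro i h1 h2; simp only [hy]; split_ifs <;> omega
  · rintro ⟨c, hc'⟩; simp only [hy]; split_ifs <;> omega
  · intro i h1 h2; simp only [hu]; split_ifs <;> omega
  · intro i h1 h2; simp only [hu]; split_ifs <;> omega
  · intro i h1; simp only [hu]; split_ifs <;> omega
  · rw [py]; push_cast; nlinarith
  · rw [py, y1]; push_cast; nlinarith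
  · intro i; simp only [hu]; split_ifs <;> simp
  · rw [u1]; push_cast; ring
  · intro i h1 h2; simp only [hy, hu]; split_ifs <;> first | contradiction | omega
  · rw [py, pu, y1, Finset.sum_eq_zero]
    · ring
    · intro i hi
      rw [mem_Icc] at hi
      by_cases h : i + 1 ≤ 2*s
      · simp only [hy, hu]
        split_ifs <;> first | omega | ring
      · simp only [hu]
        rw [if_neg (by omega), if_neg (by omega)]; ring

open Finset in
theorem exB (a : ℕ) (ha : 1 ≤ a) :
    ∃ p ∈ YU (2*a) (a+1) (2*a+3) (2*a),
    psize 3 p.1 + psize 3 p.2 + (2*a:ℤ) * (p.1 1 - 1)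
      - ∑ i ∈ Finset.Icc 1 (3-1), p.2 (i+1) * ((p.1 i - p.1 (i+1)) - (p.2 i - p.2 (i+1)))
      = (2*a:ℕ) * (2*(1:ℕ)+2*a) - 2 + 2*a*(2*(1:ℕ)-2) := by
  set y : ℕ → ℤ := fun i => if i = 0 then 0 else if i ≤ 2 then (2*a:ℤ)-1 else 0 with hy
  set u : ℕ → ℤ := fun i => if i = 0 then 0 else if i ≤ 2 then 2*(a:ℤ) else if i = 3 then 2 else 0 with hu
  have I3 : Icc 1 3 = ({1,2,3} : Finset ℕ) := rfl
  have I2 : Icc 1 (3-1) = ({1,2} : Finset ℕ) := rfl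
  have py : psize 3 y = 2*((2*a:ℤ)-1) := by
    unfold psize; rw [I3]; simp [hy]; ring
  have pu : psize 3 u = 2*(2*a:ℤ) + 2 := by
    unfold psize; rw [I3]; simp [hu]; ring
  have y1 : y 1 = (2*a:ℤ)-1 := by simp [hy]
  have u1 : u 1 = 2*(a:ℤ) := by simp [hu]
  refine ⟨(y, u), ⟨⟨⟨?_, ?_, ?_⟩, ?_, ?_⟩, ⟨?_, ?_, ?_⟩, ?_, ?_, ?_, ?_, ?_⟩, ?_⟩ <;>
    simp only [show 2*a+3-2*a = 3 by omega]
  · intro i h1 h2; simp only [hy]; split_ifs <;> omega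
  · intro i h1 h2; simp only [hy]; split_ifs <;> omega
  · intro i h1; simp only [hy]; split_ifs <;> omega
  · intro i h1 h2; simp only [hy]; split_ifs <;> omega
  · intro _; simp [hy]
  · intro i h1 h2; simp only [hu]; split_ifs <;> omega
  · intro i h1 h2; simp only [hu]; split_ifs <;> omega
  · intro i h1; simp only [hu]; split_ifs <;> omega
  · rw [py]; push_cast; nlinarith
  · rw [py, y1]; push_cast; nlinarith
  · intro i; simp only [hu]; split_ifs <;> simp
  · rw [u1]; push_cast; ring
  · intro i h1 h2; simp only [hy, hu]; split_ifs <;> first | contradiction | omega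
  · rw [py, pu, y1, I2]
    simp [hy, hu]
    ring

/-- Proposition 5.1 (optimization): in each of the four listed cases, the maximum
`R_{q,k,n,d}` of `g_{q,k,n,d}` over `𝒴𝒰(q,k,n,d)` equals `dk - 1 + q(k - q/2 - 1)`. -/
theorem R_value (q k n d : ℕ) (hq : Even q) (hqk : q < 2 * k) (hkn : 2 * k ≤ n) (hd : 1 ≤ d)
    (hcase :
      (Even n ∧ 2 * k ≤ n - 2 ∧ n - 2 ≤ d) ∨
      (Odd n ∧ 2 * k ≤ n - 2 ∧ n - 3 ≤ d) ∨
      (Even n ∧ 2 * k = n ∧ q = 2 * k - 2) ∨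
      (Odd n ∧ 2 * k = n - 1 ∧ q = 2 * k - 2 ∧ n - 3 ≤ d)) :
    IsGreatest (gfun q n '' YU q k n d)
      ((d : ℚ) * (k : ℚ) - 1 + (q : ℚ) * ((k : ℚ) - (q : ℚ) / 2 - 1)) := by
  obtain ⟨a, rfl⟩ := hq
  obtain ⟨s, rfl⟩ : ∃ s, k = a + s := ⟨k - a, by omega⟩
  obtain ⟨m, rfl⟩ : ∃ m, n = 2*a + m := ⟨n - 2*a, by omega⟩
  rw [← two_mul] at *
  obtain ⟨r, hm⟩ : ∃ r, m = 2*r ∨ m = 2*r+1 := ⟨m/2, by omega⟩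
  have hs : 1 ≤ s := by omega
  have hsr : s ≤ r := by omega
  have hval : ((d:ℚ) * ((a + s : ℕ) : ℚ) - 1 + ((2*a : ℕ) : ℚ) * (((a+s : ℕ) : ℚ) - ((2*a : ℕ) : ℚ) / 2 - 1))
      = (((d:ℤ) * (2*s+2*a) - 2 + 2*a*(2*s-2) : ℤ) : ℚ) / 2 := by
    push_cast; ring
  have hpar : (Even (2*a+m) → m = 2*r) ∧ (Odd (2*a+m) → m = 2*r+1) := by
    constructor
    · rintro ⟨c, hc⟩; omega
    · rintro ⟨c, hc⟩; omega
  have hfacts : (s < r → 2*a+2*r-2 ≤ d) ∧ (m = 2*r+1 → 2*a+2*r-2 ≤ d) ∧ (s < r ∨ s = 1) := by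
    rcases hcase with ⟨h0, h⟩ | ⟨h0, h⟩ | ⟨h0, h⟩ | ⟨h0, h⟩
    · have := hpar.1 h0; omega
    · have := hpar.2 h0; omega
    · have := hpar.1 h0; omega
    · have := hpar.2 h0; omega
  obtain ⟨f1, f2, f3⟩ := hfacts
  rw [hval]
  have hg : ∀ p, gfun (2*a) (2*a+m) p = (((psize m p.1 + psize m p.2 + (2*a:ℤ) * (p.1 1 - 1)
      - ∑ i ∈ Finset.Icc 1 (m-1), p.2 (i+1) * ((p.1 i - p.1 (i+1)) - (p.2 i - p.2 (i+1))) : ℤ)) : ℚ) / 2 := by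
    intro p
    have := gfun_int (2*a) (2*a+m) p
    rw [show 2*a+m-2*a = m by omega] at this
    rw [this]
    push_cast
    rfl
  constructor
  · by_cases hd1 : 2*s < m → 2*a+s ≤ d
    · obtain ⟨p, hp, he⟩ := exA a s m d r hm hs hsr hd f3 hd1
      exact ⟨p, hp, by rw [hg, he]⟩
    · have h1 : s = 1 := by omega
      have h2 : m = 3 := by omega
      have h3 : d = 2*a := by omega
      subst h1 h2 h3
      obtain ⟨p, hp, he⟩ := exB a (by omega)
      exact ⟨p, hp, by rw [hg, he]⟩
  · rintro _ ⟨p, hp, rfl⟩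
    rw [hg]
    have := ub a s m d r hm hs hsr f1 f2 p hp
    have h2 : ((psize m p.1 + psize m p.2 + (2*a:ℤ) * (p.1 1 - 1)
      - ∑ i ∈ Finset.Icc 1 (m-1), p.2 (i+1) * ((p.1 i - p.1 (i+1)) - (p.2 i - p.2 (i+1))) : ℤ) : ℚ)
      ≤ (((d:ℤ) * (2*s+2*a) - 2 + 2*a*(2*s-2) : ℤ) : ℚ) := by exact_mod_cast this
    linarith
end

section
/- Let q be an even integer and k, n, d integers with 0 ≤ q < 2k ≤ n−2 and d ≥ n−3. Then R_{q,k,n,d} ≥ dk − 1 + q(k − q/2 − 1). (In particular YU(q,k,n,d) is nonempty.) -/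
/-- The block of height `c` on positions `1..a`. -/
def blk (a : ℕ) (c : ℤ) (i : ℕ) : ℤ := if 1 ≤ i ∧ i ≤ a then c else 0

theorem blk_sum (m a : ℕ) (c : ℤ) (h : a ≤ m) : ∑ i ∈ Finset.Icc 1 m, blk a c i = a * c := by
  unfold blk
  rw [← Finset.sum_filter]
  have : (Finset.Icc 1 m).filter (fun i => 1 ≤ i ∧ i ≤ a) = Finset.Icc 1 a := by
    ext i; simp only [Finset.mem_filter, Finset.mem_Icc]; omega
  rw [this]; simp

/-- Lemma 5.4 (lower bound): if `q` is even, `0 ≤ q < 2k ≤ n-2` and `d ≥ n-3`, then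
`R_{q,k,n,d} ≥ dk - 1 + q(k - q/2 - 1)`; in particular `𝒴𝒰(q,k,n,d)` is nonempty. -/
theorem R_lower_bound (q k n d : ℕ) (hq : Even q) (hqk : q < 2 * k) (hkn : 2 * k ≤ n - 2)
    (hd : n - 3 ≤ d) :
    ∃ p ∈ YU q k n d,
      (d : ℚ) * (k : ℚ) - 1 + (q : ℚ) * ((k : ℚ) - (q : ℚ) / 2 - 1) ≤ gfun q n p := by
  obtain ⟨s, rfl⟩ := hq
  obtain ⟨K, rfl⟩ : ∃ K, k = K + s := ⟨k - s, by omega⟩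
  obtain ⟨m, hm⟩ : ∃ m, n - (s + s) = m := ⟨_, rfl⟩
  have hK : 1 ≤ K := by omega
  have hmK : 2 * K + 2 ≤ m := by omega
  have hdK : K + 2 * s ≤ d := by omega
  set y : ℕ → ℤ := fun i => blk (2 * K) ((d : ℤ) - K) i + blk (2 * K + 2) ((K : ℤ) - 1) i with hy
  set u : ℕ → ℤ := fun i => blk (2 * K) ((s : ℤ) + s) i with hu
  have hys : psize m y = 2 * (d * K - 1) := by
    simp only [psize, hy, Finset.sum_add_distrib]
    rw [blk_sum _ _ _ (by omega), blk_sum _ _ _ (by omega)]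
    push_cast; ring
  have hus : psize m u = 2 * K * (s + s) := by
    simp only [psize, hu]
    rw [blk_sum _ _ _ (by omega)]
    push_cast; ring
  have hy1 : y 1 = d - 1 := by
    simp only [hy, blk]; split_ifs <;> omega
  refine ⟨(y, u), ⟨⟨⟨?_, ?_, ?_⟩, ?_, ?_⟩, ⟨?_, ?_, ?_⟩, ?_, ?_, ?_, ?_, ?_⟩, ?_⟩
  · intro i h1 h2
    simp only [hy, blk]; split_ifs <;> omega
  · intro i h1 h2
    simp only [hy, blk]; split_ifs <;> omega
  · intro i h1
    simp only [hy, blk]; split_ifs <;> omega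
  · intro i h1 h2
    simp only [hy, blk]; split_ifs <;> omega
  · intro h
    rw [hm] at h ⊢
    obtain ⟨r, hr⟩ := h
    simp only [hy, blk]; split_ifs <;> omega
  · intro i h1 h2
    simp only [hu, blk]; split_ifs <;> omega
  · intro i h1 h2
    simp only [hu, blk]; split_ifs <;> omega
  · intro i h1
    simp only [hu, blk]; split_ifs <;> omega
  · simp only [hm, hys]; push_cast; apply le_of_eq; ring
  · simp only [hm, hys, hy1]; push_cast; apply le_of_eq; ring
  · intro i
    simp only [hu, blk]; split_ifs
    · exact ⟨s, rfl⟩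
    · simp
  · simp only [hu, blk]; rw [if_pos ⟨le_refl 1, by omega⟩]; push_cast; rfl
  · intro i h1 h2
    simp only [hy, hu, blk]; split_ifs <;> omega
  · unfold gfun
    simp only [hm, hys, hus, hy1]
    rw [Finset.sum_eq_zero]
    · push_cast; apply le_of_eq; ring
    · intro i hi
      rw [Finset.mem_Icc] at hi
      by_cases h : i + 1 ≤ 2 * K
      · have e1 : y i = y (i + 1) := by
          simp only [hy, blk]; split_ifs <;> omega
        have e2 : u i = u (i + 1) := by
          simp only [hu, blk]; split_ifs <;> omega
        rw [e1, e2]; ring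
      · have e2 : u (i + 1) = 0 := by
          simp only [hu, blk]; split_ifs <;> omega
        rw [e2]; simp
end

section
/- Let k, n, d be integers with 2 < 2k ≤ n−2 and 1 ≤ d ≤ n−4. Then R_{2k−2, k, n, d} ≥ dk. -/
/-- auxiliary step sequence: `a` on positions 1,2; `b` on positions 3..M+4. -/
def stepF (M : ℕ) (a b : ℤ) : ℕ → ℤ := fun i =>
  if i = 0 then 0 else if i ≤ 2 then a else if i ≤ M + 4 then b else 0

lemma sum_two (a b : ℤ) (M : ℕ) (f : ℕ → ℤ) (h1 : f 1 = a) (h2 : f 2 = a)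
    (h : ∀ i, 3 ≤ i → i ≤ M + 4 → f i = b) :
    ∑ i ∈ Finset.Icc 1 (M + 4), f i = 2 * a + (M + 2) * b := by
  induction M with
  | zero =>
    have h3 := h 3 (by omega) (by omega)
    have h4 := h 4 (by omega) (by omega)
    simp [Finset.sum_Icc_succ_top, h1, h2, h3, h4]; ring
  | succ M ih =>
    rw [show M + 1 + 4 = (M + 4) + 1 by ring, Finset.sum_Icc_succ_top (by omega),
      ih (fun i hi hi' => h i hi (by omega)), h (M + 4 + 1) (by omega) (by omega)]
    push_cast; ring

lemma psize_stepF (M : ℕ) (a b : ℤ) : psize (M + 4) (stepF M a b) = 2 * a + (M + 2) * b := by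
  apply sum_two
  · simp [stepF]
  · simp [stepF]
  · intro i h1 h2
    simp only [stepF]
    split_ifs <;> first | rfl | omega

lemma isPart_stepF (M : ℕ) (a b : ℤ) (hb : 0 ≤ b) (hab : b ≤ a) :
    IsPart (M + 4) (stepF M a b) := by
  refine ⟨?_, ?_, ?_⟩ <;> intro i <;> intros <;> simp only [stepF] <;> split_ifs <;> omega

lemma stepF_tail (M : ℕ) (a b : ℤ) (i : ℕ) (h : 3 ≤ i) (h3 : i ≤ M + 3) :
    stepF M a b i = stepF M a b (i + 1) := by
  simp only [stepF]
  rw [if_neg (by omega), if_neg (by omega), if_pos (by omega), if_neg (by omega),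
    if_neg (by omega), if_pos (by omega)]

theorem R_symbolic_lower (k n d : ℕ) (hk : 2 < 2 * k) (hkn : 2 * k ≤ n - 2)
    (hd1 : 1 ≤ d) (hd2 : d ≤ n - 4) :
    ∃ p ∈ YU (2 * k - 2) k n d, (d : ℚ) * (k : ℚ) ≤ gfun (2 * k - 2) n p := by
  obtain ⟨K, rfl⟩ : ∃ K, k = K + 2 := ⟨k - 2, by omega⟩
  obtain ⟨D, rfl⟩ : ∃ D, d = D + 1 := ⟨d - 1, by omega⟩
  obtain ⟨M, rfl⟩ : ∃ M, n = M + 4 + (2 * K + 2) := ⟨n - 4 - (2 * K + 2), by omega⟩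
  obtain ⟨c, hcK, hcD, hcM⟩ : ∃ c, c ≤ K ∧ 2 * c ≤ D ∧ D ≤ M + 1 + 2 * c := by
    rcases le_total (2 * K) D with h | h
    · exact ⟨K, le_rfl, h, by omega⟩
    · exact ⟨D / 2, by omega, by omega, by omega⟩
  have hq : 2 * (K + 2) - 2 = 2 * K + 2 := by omega
  have hm : M + 4 + (2 * K + 2) - (2 * K + 2) = M + 4 := by omega
  refine ⟨(stepF M D 0, stepF M (2 * K + 2) (2 * K + 2 - 2 * c)), ?_, ?_⟩
  · rw [hq]
    simp only [YU, Set.mem_ofPred_eq, hm, psize_stepF]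
    refine ⟨⟨isPart_stepF _ _ _ (by omega) (by omega), ?_, ?_⟩,
      isPart_stepF _ _ _ (by omega) (by omega), ?_, ?_, ?_, ?_, ?_⟩
    · intro i h1 h2
      simp only [stepF]; split_ifs <;> omega
    · intro _
      simp only [stepF]; split_ifs <;> omega
    · push_cast; linarith
    · have : stepF M D 0 1 = D := by simp [stepF]
      rw [this]; push_cast; linarith
    · intro i
      simp only [stepF]; split_ifs <;> rw [Int.even_iff] <;> omega
    · simp [stepF]
    · intro i h1 h2
      have h3 : i ≤ M + 3 := h2
      rcases (by omega : i = 1 ∨ i = 2 ∨ 3 ≤ i) with rfl | rfl | h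
      · simp [stepF]
      · simp [stepF]; omega
      · rw [stepF_tail M _ _ i h h3, stepF_tail M _ _ i h h3]; simp
  · rw [hq]
    simp only [gfun, hm, psize_stepF]
    rw [Finset.sum_eq_single 2]
    · have h1 : stepF M D 0 1 = D := by simp [stepF]
      have h2 : stepF M D 0 2 = D := by simp [stepF]
      have h3 : stepF M D 0 (2 + 1) = 0 := by simp [stepF]
      have h4 : stepF M (2 * K + 2) (2 * K + 2 - 2 * c) 2 = 2 * K + 2 := by simp [stepF]
      have h5 : stepF M (2 * K + 2) (2 * K + 2 - 2 * c) (2 + 1) = 2 * K + 2 - 2 * c := by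
        simp [stepF]
      rw [h1, h2, h3, h4, h5]
      have e1 : (0 : ℚ) ≤ K - c := by
        have : (c : ℚ) ≤ K := by exact_mod_cast hcK
        linarith
      have e2 : (0 : ℚ) ≤ M + 1 + 2 * c - D := by
        have : (D : ℚ) ≤ M + 1 + 2 * c := by exact_mod_cast hcM
        linarith
      push_cast
      nlinarith [mul_nonneg e1 e2]
    · intro i hi hne
      rw [Finset.mem_Icc] at hi
      have h3 : i ≤ M + 3 := hi.2
      have hh : ∀ a b : ℤ, stepF M a b i = stepF M a b (i + 1) := by
        intro a b
        rcases (by omega : i = 1 ∨ 3 ≤ i) with rfl | h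
        · simp [stepF]
        · exact stepF_tail M a b i h h3
      rw [hh, hh]; ring
    · intro h
      exact absurd (Finset.mem_Icc.mpr ⟨by omega, by omega⟩) h
end

section
/- Let q be an even integer, k, n, d integers with 0 ≤ q < 2k ≤ n and d ≥ 1, and let p be an even integer with 0 ≤ p ≤ q. Then the map (y,u) ↦ (y, u − (p,p,...,p)) (subtracting p from every entry of u) is a bijection from the set {(y,u) ∈ YU(q,k,n,d) : u_{n−q} ≥ p} onto YU(q−p, k−p/2, n−p, d). Moreover, if u_{n−q} = p and v = u − (p,...,p), then g_{q−p,k−p/2,n−p,d}(y,v) = g_{q,k,n,d}(y,u) − (p/2)(n − p + y_{n−q} − 1). -/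
theorem isPart_ge_last (N : ℕ) (u : ℕ → ℤ) (h : ∀ i, 1 ≤ i → i < N → u (i + 1) ≤ u i) :
    ∀ j i, 1 ≤ i → i + j = N → u N ≤ u i := by
  intro j
  induction j with
  | zero => intro i _ h2; simp at h2; rw [h2]
  | succ j ih =>
    intro i h1 h2
    have a := ih (i + 1) (by omega) (by omega)
    have b := h i h1 (by omega)
    omega

theorem tele_sum (f : ℕ → ℚ) (m : ℕ) :
    ∑ i ∈ Finset.Icc 1 m, (f i - f (i + 1)) = f 1 - f (m + 1) := by
  induction m with
  | zero => simp
  | succ m ih => rw [Finset.sum_Icc_succ_top (by omega), ih]; ring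

/-- Case 3 of the proof of Proposition 5.1: for `p` even with `0 ≤ p ≤ q`, the map
`(y,u) ↦ (y, u - (p,...,p))` is a bijection from `{(y,u) ∈ 𝒴𝒰(q,k,n,d) : u_{n-q} ≥ p}`
onto `𝒴𝒰(q-p, k-p/2, n-p, d)`, and when `u_{n-q} = p` it changes `g` by
`-(p/2)(n - p + y_{n-q} - 1)`. -/
theorem YU_bijection (q k n d p : ℕ) (hq : Even q) (hp : Even p) (hpq : p ≤ q)
    (hqk : q < 2 * k) (hkn : 2 * k ≤ n) (hd : 1 ≤ d) :
    Set.BijOn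
      (fun w : (ℕ → ℤ) × (ℕ → ℤ) =>
        (w.1, fun i => w.2 i - if 1 ≤ i ∧ i ≤ n - q then (p : ℤ) else 0))
      { w ∈ YU q k n d | (p : ℤ) ≤ w.2 (n - q) }
      (YU (q - p) (k - p / 2) (n - p) d) ∧
    ∀ w ∈ YU q k n d, w.2 (n - q) = (p : ℤ) →
      gfun (q - p) (n - p)
          (w.1, fun i => w.2 i - if 1 ≤ i ∧ i ≤ n - q then (p : ℤ) else 0) =
        gfun q n w - ((p : ℚ) / 2) * ((n : ℚ) - (p : ℚ) + (w.1 (n - q) : ℚ) - 1) := by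
  have hN : n - p - (q - p) = n - q := by omega
  have hN1 : 1 ≤ n - q := by omega
  have hk : 2 * ((k - p / 2 : ℕ) : ℤ) - ((q - p : ℕ) : ℤ) = 2 * (k : ℤ) - (q : ℤ) := by
    obtain ⟨r, rfl⟩ := hp
    omega
  have hpe : Even (p : ℤ) := by exact_mod_cast hp
  refine ⟨⟨?_, ?_, ?_⟩, ?_⟩
  · rintro ⟨y, u⟩ ⟨⟨h1, ⟨h2a, h2b, h2c⟩, h3, h4, h5, h6, h7⟩, hu⟩
    simp only at h1 h2a h2b h2c h3 h4 h5 h6 h7 hu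
    simp only [YU, Set.mem_setOf_eq, hN, hk]
    refine ⟨h1, ⟨?_, ?_, ?_⟩, h3, h4, ?_, ?_, ?_⟩
    · intro i hi hi2
      simp only
      rw [if_pos (by omega), if_pos (by omega)]
      have := h2a i hi hi2
      omega
    · intro i hi hi2
      simp only
      rw [if_pos (by omega)]
      have := isPart_ge_last _ u h2a (n - q - i) i hi (by omega)
      omega
    · intro i hi
      simp only
      rw [if_neg (by omega), h2c i hi, sub_zero]
    · intro i
      split_ifs
      · exact (h5 i).sub hpe
      · simpa using h5 i
    · rw [if_pos (by omega), h6]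
      omega
    · intro i hi hi2
      rw [if_pos (by omega), if_pos (by omega)]
      have := h7 i hi hi2
      omega
  · rintro ⟨y, u⟩ - ⟨y', u'⟩ - h
    simp only [Prod.mk.injEq] at h
    obtain ⟨h1, h2⟩ := h
    refine Prod.ext h1 (funext fun i => ?_)
    have := congrFun h2 i
    simpa using this
  · rintro ⟨y, v⟩ h
    simp only [YU, Set.mem_setOf_eq, hN, hk] at h
    obtain ⟨h1, ⟨h2a, h2b, h2c⟩, h3, h4, h5, h6, h7⟩ := h
    refine ⟨(y, fun i => v i + if 1 ≤ i ∧ i ≤ n - q then (p : ℤ) else 0), ⟨⟨h1, ⟨?_, ?_, ?_⟩, h3, h4, ?_, ?_, ?_⟩, ?_⟩, ?_⟩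
    · intro i hi hi2
      simp only
      rw [if_pos (by omega), if_pos (by omega)]
      have := h2a i hi hi2
      omega
    · intro i hi hi2
      simp only
      rw [if_pos (by omega)]
      have := h2b i hi hi2
      omega
    · intro i hi
      simp only
      rw [if_neg (by omega), h2c i hi, add_zero]
    · intro i
      simp only
      split_ifs
      · exact (h5 i).add hpe
      · simpa using h5 i
    · simp only
      rw [if_pos (by omega), h6]
      omega
    · intro i hi hi2
      simp only
      rw [if_pos (by omega), if_pos (by omega)]
      have := h7 i hi hi2
      omega
    · simp only
      rw [if_pos (by omega)]
      have := h2b (n - q) (by omega) le_rfl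
      omega
    · simp
  · rintro ⟨y, u⟩ ⟨-, -, -, -, -, h6, -⟩ hu
    simp only at h6 hu
    simp only [gfun, hN]
    have e1 : psize (n - q) (fun i => u i - if 1 ≤ i ∧ i ≤ n - q then (p : ℤ) else 0)
        = psize (n - q) u - ((n : ℤ) - q) * p := by
      unfold psize
      rw [Finset.sum_sub_distrib, Finset.sum_congr rfl
        (g := fun _ => (p : ℤ)) (fun i hi => if_pos (Finset.mem_Icc.mp hi))]
      simp only [Finset.sum_const, Nat.card_Icc, nsmul_eq_mul, Nat.add_sub_cancel]
      rw [Nat.cast_sub (by omega)]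
    have t := tele_sum (fun i => (y i : ℚ) - u i) (n - q - 1)
    rw [Nat.sub_add_cancel hN1, h6, hu] at t
    have e2 : ∑ i ∈ Finset.Icc 1 (n - q - 1),
        (((u (i + 1) - if 1 ≤ i + 1 ∧ i + 1 ≤ n - q then (p : ℤ) else 0 : ℤ) : ℚ) / 2) *
          (((y i : ℚ) - (y (i + 1) : ℚ)) -
            (((u i - if 1 ≤ i ∧ i ≤ n - q then (p : ℤ) else 0 : ℤ) : ℚ) -
             ((u (i + 1) - if 1 ≤ i + 1 ∧ i + 1 ≤ n - q then (p : ℤ) else 0 : ℤ) : ℚ)))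
        = ∑ i ∈ Finset.Icc 1 (n - q - 1), ((u (i + 1) : ℚ) / 2) *
          (((y i : ℚ) - (y (i + 1) : ℚ)) - ((u i : ℚ) - (u (i + 1) : ℚ)))
          - (p : ℚ) / 2 * ∑ i ∈ Finset.Icc 1 (n - q - 1),
            (((y i : ℚ) - u i) - ((y (i + 1) : ℚ) - u (i + 1))) := by
      rw [Finset.mul_sum, ← Finset.sum_sub_distrib]
      refine Finset.sum_congr rfl fun i hi => ?_
      rw [Finset.mem_Icc] at hi
      rw [if_pos (by omega), if_pos (by omega)]
      push_cast
      ring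
    rw [e2, t, e1, Nat.cast_sub hpq]
    push_cast
    ring
end

section
/- Let n ≥ 2 be even, m = n/2, and fix integers 0 ≤ l ≤ m−1 and c ≥ 0. Then the maximum, over all pairs (z,t) with z ∈ P(m) satisfying z_1 = z_2 = ... = z_{l+1} = c and t ∈ T_l(z), of the quantity Σ_{i=l+1}^{m} z_i + l(c−1) + |t| − f_l(z,t), equals (n−2l−1)·l + c·m; it is attained at z = (c,c,...,c) (m copies) and t = (l,l,...,l) (n−2l copies). (Via the identity reg(J_{z,l}) = max_{t ∈ T_l(z)} (Σ_{i=l+1}^m z_i + l(z_1−1) + |t| − f_l(z,t)), this computes max{reg(J_{z,l}) : z_1 = ... = z_{l+1} = c} = reg(J_{(c^m),l}).) -/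
/-- `z^{(2)}`: the sequence `(z₁,z₁,z₂,z₂,…)`, so `(z^{(2)})_j = z_{⌈j/2⌉}`,
regarded as a sequence of length `n` (padded with a final zero when `n` is odd,
which is automatic since `z i = 0` for `i > m`). -/
def zdub (z : ℕ → ℤ) (j : ℕ) : ℤ := z ((j + 1) / 2)

/-- The set `𝒯_l(z)` of sequences `t = (t₁,…,t_{n-2l})` with `t₁ = l`,
`t₁ ≥ t₂ ≥ ⋯ ≥ t_{n-2l} ≥ 0`, and
`z^{(2)}_{2l+i} - z^{(2)}_{2l+i+1} ≥ 2t_i - 2t_{i+1}` for `1 ≤ i ≤ n-2l-1`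
(encoded with `t i = 0` for `i = 0` and `i > n-2l`). -/
def Tset (n l : ℕ) (z : ℕ → ℤ) : Set (ℕ → ℤ) :=
  { t | t 1 = (l : ℤ) ∧
    (∀ i, 1 ≤ i → i < n - 2 * l → t (i + 1) ≤ t i) ∧
    (∀ i, 1 ≤ i → i ≤ n - 2 * l → 0 ≤ t i) ∧
    (∀ i, i = 0 ∨ n - 2 * l < i → t i = 0) ∧
    (∀ i, 1 ≤ i → i ≤ n - 2 * l - 1 →
      2 * t i - 2 * t (i + 1) ≤ zdub z (2 * l + i) - zdub z (2 * l + i + 1)) }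

/-- `|t| = t₁ + ⋯ + t_{n-2l}`. -/
def tsize (n l : ℕ) (t : ℕ → ℤ) : ℤ := ∑ i ∈ Finset.Icc 1 (n - 2 * l), t i

/-- `f_l(z,t) = Σ_{i=1}^{n-2l-1} t_{i+1}((z^{(2)}_{2l+i} - z^{(2)}_{2l+i+1}) - (2t_i - 2t_{i+1}))`. -/
def ffun (n l : ℕ) (z t : ℕ → ℤ) : ℤ :=
  ∑ i ∈ Finset.Icc 1 (n - 2 * l - 1),
    t (i + 1) * ((zdub z (2 * l + i) - zdub z (2 * l + i + 1)) - (2 * t i - 2 * t (i + 1)))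


/-- Lemma 4.1: for `n` even, `m = n/2`, `0 ≤ l ≤ m-1` and `c ≥ 0`, the maximum of
`Σ_{i=l+1}^m z_i + l(c-1) + |t| - f_l(z,t)` over all `z ∈ P(m)` with
`z₁ = ⋯ = z_{l+1} = c` and all `t ∈ 𝒯_l(z)` equals `(n-2l-1)l + cm`, and it is
attained at `z = (c^m)` and `t = (l^{n-2l})`.  (Via `reg(J_{z,l}) =
max_{t ∈ 𝒯_l(z)} (Σ_{i=l+1}^m z_i + l(z₁-1) + |t| - f_l(z,t))`, this computes
`max{reg(J_{z,l}) : z₁ = ⋯ = z_{l+1} = c} = reg(J_{(c^m),l})`.) -/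
theorem reg_J_even (n m l : ℕ) (c : ℤ) (hn : Even n) (h2 : 2 ≤ n) (hm : m = n / 2)
    (hl : l ≤ m - 1) (hc : 0 ≤ c) :
    IsGreatest
      { v : ℤ | ∃ z t : ℕ → ℤ, IsPart m z ∧ (∀ i, 1 ≤ i → i ≤ l + 1 → z i = c) ∧
          t ∈ Tset n l z ∧
          v = (∑ i ∈ Finset.Icc (l + 1) m, z i) + (l : ℤ) * (c - 1)
                + tsize n l t - ffun n l z t }
      (((n : ℤ) - 2 * (l : ℤ) - 1) * (l : ℤ) + c * (m : ℤ)) ∧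
    (fun i => if 1 ≤ i ∧ i ≤ n - 2 * l then (l : ℤ) else 0) ∈
      Tset n l (fun i => if 1 ≤ i ∧ i ≤ m then c else 0) ∧
    (∑ i ∈ Finset.Icc (l + 1) m, (if 1 ≤ i ∧ i ≤ m then c else 0)) + (l : ℤ) * (c - 1)
        + tsize n l (fun i => if 1 ≤ i ∧ i ≤ n - 2 * l then (l : ℤ) else 0)
        - ffun n l (fun i => if 1 ≤ i ∧ i ≤ m then c else 0)
            (fun i => if 1 ≤ i ∧ i ≤ n - 2 * l then (l : ℤ) else 0)
      = ((n : ℤ) - 2 * (l : ℤ) - 1) * (l : ℤ) + c * (m : ℤ) := by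
  obtain ⟨k, hk⟩ := hn
  have hnm : n = 2 * m := by omega
  have hlm : l + 1 ≤ m := by omega
  clear hk hm hl h2
  subst hnm
  have hcard : ((2 * m - 2 * l : ℕ) : ℤ) = 2 * (m : ℤ) - 2 * l := by omega
  have hcard2 : ((m + 1 - (l + 1) : ℕ) : ℤ) = (m : ℤ) - l := by omega
  have hT : (fun i => if 1 ≤ i ∧ i ≤ 2 * m - 2 * l then (l : ℤ) else 0) ∈
      Tset (2 * m) l (fun i => if 1 ≤ i ∧ i ≤ m then c else 0) := by
    refine ⟨?_, ?_, ?_, ?_, ?_⟩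
    · exact if_pos ⟨le_rfl, by omega⟩
    · intro i h1 h2
      simp only
      rw [if_pos (by omega), if_pos (by omega)]
    · intro i h1 h2
      simp only
      rw [if_pos (by omega)]
      omega
    · intro i h
      simp only
      rw [if_neg (by omega)]
    · intro i h1 h2
      simp only [zdub]
      rw [if_pos (by omega), if_pos (by omega), if_pos (by omega), if_pos (by omega)]
      simp
  have hV : (∑ i ∈ Finset.Icc (l + 1) m, (if 1 ≤ i ∧ i ≤ m then c else 0)) + (l : ℤ) * (c - 1)
        + tsize (2 * m) l (fun i => if 1 ≤ i ∧ i ≤ 2 * m - 2 * l then (l : ℤ) else 0)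
        - ffun (2 * m) l (fun i => if 1 ≤ i ∧ i ≤ m then c else 0)
            (fun i => if 1 ≤ i ∧ i ≤ 2 * m - 2 * l then (l : ℤ) else 0)
      = (((2 * m : ℕ) : ℤ) - 2 * (l : ℤ) - 1) * (l : ℤ) + c * (m : ℤ) := by
    have e1 : (∑ i ∈ Finset.Icc (l + 1) m, (if 1 ≤ i ∧ i ≤ m then c else 0))
        = ((m : ℤ) - l) * c := by
      rw [Finset.sum_congr rfl (g := fun _ => c)]
      · rw [Finset.sum_const, Nat.card_Icc, nsmul_eq_mul, hcard2]
      · intro i hi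
        rw [Finset.mem_Icc] at hi
        exact if_pos (by omega)
    have e2 : tsize (2 * m) l (fun i => if 1 ≤ i ∧ i ≤ 2 * m - 2 * l then (l : ℤ) else 0)
        = (2 * (m : ℤ) - 2 * l) * l := by
      unfold tsize
      rw [Finset.sum_congr rfl (g := fun _ => (l : ℤ))]
      · rw [Finset.sum_const, Nat.card_Icc, nsmul_eq_mul, Nat.add_sub_cancel, hcard]
      · intro i hi
        rw [Finset.mem_Icc] at hi
        exact if_pos (by omega)
    have e3 : ffun (2 * m) l (fun i => if 1 ≤ i ∧ i ≤ m then c else 0)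
            (fun i => if 1 ≤ i ∧ i ≤ 2 * m - 2 * l then (l : ℤ) else 0) = 0 := by
      unfold ffun
      apply Finset.sum_eq_zero
      intro i hi
      rw [Finset.mem_Icc] at hi
      simp only [zdub]
      rw [if_pos (by omega), if_pos (by omega), if_pos (by omega), if_pos (by omega)]
      ring
    rw [e1, e2, e3]
    push_cast
    ring
  refine ⟨⟨⟨_, _, ?_, ?_, hT, hV.symm⟩, ?_⟩, hT, hV⟩
  · refine ⟨?_, ?_, ?_⟩
    · intro i h1 h2
      simp only
      rw [if_pos (by omega), if_pos (by omega)]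
    · intro i h1 h2
      simp only
      rw [if_pos (by omega)]
      exact hc
    · intro i h
      simp only
      rw [if_neg (by omega)]
  · intro i h1 h2
    exact if_pos ⟨h1, by omega⟩
  · rintro v ⟨z, t, ⟨hz1, hz2, hz3⟩, hzc, ⟨ht1, ht2, ht3, ht4, ht5⟩, rfl⟩
    have hz : ∀ i, l + 1 ≤ i → i ≤ m → z i ≤ c := by
      intro i hi
      induction i, hi using Nat.le_induction with
      | base => intro _; exact (hzc _ (by omega) le_rfl).le
      | succ i hi ih => intro h; exact (hz1 i (by omega) (by omega)).trans (ih (by omega))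
    have ht : ∀ i, 1 ≤ i → i ≤ 2 * m - 2 * l → t i ≤ l := by
      intro i hi
      induction i, hi using Nat.le_induction with
      | base => intro _; exact ht1.le
      | succ i hi ih => intro h; exact (ht2 i (by omega) (by omega)).trans (ih (by omega))
    have e1 : ∑ i ∈ Finset.Icc (l + 1) m, z i ≤ ((m : ℤ) - l) * c := by
      have := Finset.sum_le_card_nsmul (Finset.Icc (l + 1) m) z c (fun i hi => by
        rw [Finset.mem_Icc] at hi
        exact hz i hi.1 hi.2)
      rwa [Nat.card_Icc, nsmul_eq_mul, hcard2] at this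
    have e2 : tsize (2 * m) l t ≤ (2 * (m : ℤ) - 2 * l) * l := by
      have := Finset.sum_le_card_nsmul (Finset.Icc 1 (2 * m - 2 * l)) t l (fun i hi => by
        rw [Finset.mem_Icc] at hi
        exact ht i hi.1 hi.2)
      rwa [Nat.card_Icc, nsmul_eq_mul, Nat.add_sub_cancel, hcard] at this
    have e3 : 0 ≤ ffun (2 * m) l z t := by
      apply Finset.sum_nonneg
      intro i hi
      rw [Finset.mem_Icc] at hi
      exact mul_nonneg (ht3 _ (by omega) (by omega)) (sub_nonneg.2 (ht5 i hi.1 hi.2))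
    push_cast
    linarith
end

section
/- Let n ≥ 3 be odd, m = (n−1)/2, and fix integers 0 ≤ l ≤ m−1 and c ≥ 0. Then the maximum, over all pairs (z,t) with z ∈ P(m) satisfying z_1 = z_2 = ... = z_{l+1} = c and t ∈ T_l(z), of the quantity Σ_{i=l+1}^{m} z_i + l(c−1) + |t| − f_l(z,t), equals b(l,n,c); it is attained by some t ∈ T_l(z) at z = (c,c,...,c) (m copies). (Via the identity reg(J_{z,l}) = max_{t ∈ T_l(z)} (Σ_{i=l+1}^m z_i + l(z_1−1) + |t| − f_l(z,t)), this computes max{reg(J_{z,l}) : z_1 = ... = z_{l+1} = c} = reg(J_{(c^m),l}) = b(l,n,c).) -/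
/-- The function `b(l,n,c)` of equation (1.2). -/
def bfun (l n : ℕ) (c : ℤ) : ℤ :=
  if 2 * (l : ℤ) < c ∨ (c < 2 * (l : ℤ) ∧ Odd c) then
    (((n / 2 : ℕ) : ℤ) - (l : ℤ)) * (2 * (l : ℤ) + c) + (l : ℤ) * (c - 1)
  else
    (((n / 2 : ℕ) : ℤ) - (l : ℤ)) * (2 * (l : ℤ) + c) + c * (l : ℤ) - c / 2

theorem tele_aux (u : ℕ → ℤ) (N : ℕ) :
    ∑ i ∈ Finset.Icc 1 N, (u i - u (i + 1)) = u 1 - u (N + 1) := by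
  induction N with
  | zero => simp
  | succ k ih => rw [Finset.sum_Icc_succ_top (by omega), ih]; ring

theorem upper_aux (k l : ℕ) (c s D : ℤ) (hs : 0 ≤ s) (hD : 0 ≤ D) (hDe : D = c - 2 * l + 2 * s)
    (hc : 0 ≤ c) (n : ℕ) (hn : n / 2 = l + k) :
    (k : ℤ) * c + l * (c - 1) + (2 * k * l + s) - s * D ≤ bfun l n c := by
  unfold bfun
  rw [hn]
  push_cast
  split_ifs with h
  · have h1 : 0 ≤ s * (D - 1) := by
      rcases Int.lt_or_le D 1 with h0 | h0
      · exfalso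
        rcases h with h | ⟨h, q, hq⟩ <;> omega
      · exact mul_nonneg hs (by omega)
    nlinarith
  · push Not at h
    obtain ⟨h1, h2⟩ := h
    have hev : c % 2 = 0 := by
      rcases eq_or_lt_of_le h1 with h3 | h3
      · omega
      · have := h2 h3
        rw [Int.not_odd_iff_even] at this
        exact Int.even_iff.mp this
    rcases Int.lt_or_le D 1 with h0 | h0
    · have hD0 : D = 0 := by omega
      have : s = l - c / 2 := by omega
      rw [hD0, this]
      nlinarith
    · have h4 : 0 ≤ s * (D - 1) := mul_nonneg hs (by omega)
      have h5 : c / 2 ≤ l := by omega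
      nlinarith

/-- Lemma 4.4: for `n` odd, `m = (n-1)/2`, `0 ≤ l ≤ m-1` and `c ≥ 0`, the maximum of
`Σ_{i=l+1}^m z_i + l(c-1) + |t| - f_l(z,t)` over all `z ∈ P(m)` with
`z₁ = ⋯ = z_{l+1} = c` and all `t ∈ 𝒯_l(z)` equals `b(l,n,c)`, attained at
`z = (c^m)` for some `t ∈ 𝒯_l(z)`.  (Via the identity for `reg(J_{z,l})`, this
computes `max{reg(J_{z,l}) : z₁ = ⋯ = z_{l+1} = c} = reg(J_{(c^m),l}) = b(l,n,c)`.) -/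
theorem reg_J_odd (n m l : ℕ) (c : ℤ) (hn : Odd n) (h3 : 3 ≤ n) (hm : m = (n - 1) / 2)
    (hl : l ≤ m - 1) (hc : 0 ≤ c) :
    IsGreatest
      { v : ℤ | ∃ z t : ℕ → ℤ, IsPart m z ∧ (∀ i, 1 ≤ i → i ≤ l + 1 → z i = c) ∧
          t ∈ Tset n l z ∧
          v = (∑ i ∈ Finset.Icc (l + 1) m, z i) + (l : ℤ) * (c - 1)
                + tsize n l t - ffun n l z t }
      (bfun l n c) ∧
    ∃ t ∈ Tset n l (fun i => if 1 ≤ i ∧ i ≤ m then c else 0),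
      (∑ i ∈ Finset.Icc (l + 1) m, (if 1 ≤ i ∧ i ≤ m then c else 0)) + (l : ℤ) * (c - 1)
          + tsize n l t - ffun n l (fun i => if 1 ≤ i ∧ i ≤ m then c else 0) t
        = bfun l n c := by
  have hnm : n = 2 * m + 1 := by obtain ⟨q, hq⟩ := hn; omega
  obtain ⟨k, hk, hk1⟩ : ∃ k, m = l + k ∧ 1 ≤ k := ⟨m - l, by omega, by omega⟩
  have hN : n - 2 * l = 2 * k + 1 := by omega
  have hN1 : n - 2 * l - 1 = 2 * k := by omega
  have hn2 : n / 2 = l + k := by omega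
  have key : ∃ t ∈ Tset n l (fun i => if 1 ≤ i ∧ i ≤ m then c else 0),
      (∑ i ∈ Finset.Icc (l + 1) m, (if 1 ≤ i ∧ i ≤ m then c else 0)) + (l : ℤ) * (c - 1)
          + tsize n l t - ffun n l (fun i => if 1 ≤ i ∧ i ≤ m then c else 0) t
        = bfun l n c := by
    obtain ⟨s, hs0, hsl, hsc, hsv⟩ : ∃ s : ℤ, 0 ≤ s ∧ s ≤ l ∧ 2 * l - 2 * s ≤ c ∧
        (k : ℤ) * c + l * (c - 1) + (2 * k * l + s) - s * (c - 2 * l + 2 * s) = bfun l n c := by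
      unfold bfun
      rw [hn2]
      push_cast
      split_ifs with h
      · by_cases h' : 2 * (l : ℤ) < c
        · exact ⟨0, le_rfl, by omega, by omega, by ring⟩
        · rcases h with h | ⟨h, q, hq⟩
          · exact absurd h h'
          · refine ⟨l - q, by omega, by omega, by omega, ?_⟩
            subst hq
            ring
      · push Not at h
        obtain ⟨h1, h2⟩ := h
        have hev : c % 2 = 0 := by
          rcases eq_or_lt_of_le h1 with h3 | h3
          · omega
          · have := h2 h3
            rw [Int.not_odd_iff_even] at this
            exact Int.even_iff.mp this
        obtain ⟨q, hq⟩ : ∃ q, c = 2 * q := ⟨c / 2, by omega⟩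
        have hq2 : c / 2 = q := by omega
        refine ⟨l - q, by omega, by omega, by omega, ?_⟩
        rw [hq2]
        subst hq
        ring
    have hz : ∀ i, 1 ≤ i → i ≤ 2 * k →
        zdub (fun i => if 1 ≤ i ∧ i ≤ m then c else 0) (2 * l + i) = c := by
      intro i h1 h2
      unfold zdub
      exact if_pos ⟨by omega, by omega⟩
    have hz' : zdub (fun i => if 1 ≤ i ∧ i ≤ m then c else 0) (2 * l + 2 * k + 1) = 0 := by
      unfold zdub
      exact if_neg (by omega)
    obtain ⟨t, ht⟩ : ∃ t : ℕ → ℤ, t = fun i =>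
      if i = 0 then 0 else if i ≤ 2 * k then (l : ℤ) else if i = 2 * k + 1 then s else 0 := ⟨_, rfl⟩
    have t1 : ∀ i, 1 ≤ i → i ≤ 2 * k → t i = l := by
      intro i h1 h2
      rw [ht]; simp only
      rw [if_neg (by omega), if_pos h2]
    have t2 : t (2 * k + 1) = s := by
      rw [ht]; simp
    have t3 : ∀ i, i = 0 ∨ 2 * k + 1 < i → t i = 0 := by
      intro i h
      rw [ht]; simp only
      rcases h with h | h
      · rw [if_pos h]
      · rw [if_neg (by omega), if_neg (by omega), if_neg (by omega)]
    refine ⟨t, ⟨t1 1 le_rfl (by omega), ?_, ?_, ?_, ?_⟩, ?_⟩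
    · intro i h1 h2
      rcases Nat.lt_or_ge i (2 * k) with h | h
      · rw [t1 i h1 h.le, t1 (i + 1) (by omega) h]
      · obtain rfl : i = 2 * k := by omega
        rw [t1 _ h1 le_rfl, t2]; exact hsl
    · intro i h1 h2
      rcases Nat.lt_or_ge (2 * k) i with h | h
      · obtain rfl : i = 2 * k + 1 := by omega
        rw [t2]; exact hs0
      · rw [t1 i h1 h]; omega
    · rw [hN]; exact t3
    · intro i h1 h2
      rcases Nat.lt_or_ge i (2 * k) with h | h
      · rw [t1 i h1 h.le, t1 (i + 1) (by omega) h, hz i h1 h.le, add_assoc, hz (i + 1) (by omega) h]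
        simp
      · obtain rfl : i = 2 * k := by omega
        rw [t1 _ h1 le_rfl, t2, hz _ h1 le_rfl, hz']; omega
    · have e1 : (∑ i ∈ Finset.Icc (l + 1) m, (if 1 ≤ i ∧ i ≤ m then c else 0)) = k * c := by
        rw [Finset.sum_congr rfl (g := fun _ => c)]
        · have : m + 1 - (l + 1) = k := by omega
          simp [this]
        · intro i hi
          rw [Finset.mem_Icc] at hi
          exact if_pos ⟨by omega, by omega⟩
      have e2 : tsize n l t = 2 * k * l + s := by
        unfold tsize
        rw [hN, Finset.sum_Icc_succ_top (by omega), t2,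
          Finset.sum_congr rfl (g := fun _ => (l : ℤ))]
        · simp
        · intro i hi
          rw [Finset.mem_Icc] at hi
          exact t1 i hi.1 hi.2
      have e3 : ffun n l (fun i => if 1 ≤ i ∧ i ≤ m then c else 0) t
          = s * (c - 2 * l + 2 * s) := by
        unfold ffun
        rw [hN1, Finset.sum_eq_single (2 * k)]
        · rw [t1 _ (by omega) le_rfl, t2, hz _ (by omega) le_rfl, hz']; ring
        · intro i hi hne
          rw [Finset.mem_Icc] at hi
          rw [t1 i hi.1 hi.2, t1 (i + 1) (by omega) (by omega), hz i hi.1 hi.2, add_assoc,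
            hz (i + 1) (by omega) (by omega)]
          ring
        · intro h
          exact absurd (Finset.mem_Icc.mpr ⟨by omega, le_rfl⟩) h
      rw [e1, e2, e3, hsv]
  refine ⟨⟨?_, ?_⟩, key⟩
  · obtain ⟨t, ht, he⟩ := key
    refine ⟨_, t, ⟨?_, ?_, ?_⟩, ?_, ht, he.symm⟩
    · intro i h1 h2
      rw [if_pos ⟨by omega, by omega⟩, if_pos ⟨by omega, by omega⟩]
    · intro i h1 h2
      rw [if_pos ⟨by omega, by omega⟩]; exact hc
    · intro i h
      exact if_neg (by omega)
    · intro i h1 h2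
      exact if_pos ⟨by omega, by omega⟩
  · rintro v ⟨z, t, ⟨hz1, hz2, hz3⟩, hzc, ⟨ht1, ht2, ht3, -, ht5⟩, rfl⟩
    rw [hN] at ht2 ht3
    rw [hN1] at ht5
    have hzle : ∀ j, l + 1 + j ≤ m → z (l + 1 + j) ≤ c := by
      intro j
      induction j with
      | zero => intro _; exact (hzc _ (by omega) le_rfl).le
      | succ j ih => intro h; exact (hz1 (l + 1 + j) (by omega) (by omega)).trans (ih (by omega))
    have htle : ∀ j, 1 + j ≤ 2 * k + 1 → t (1 + j) ≤ l := by
      intro j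
      induction j with
      | zero => intro _; exact ht1.le
      | succ j ih => intro h; exact (ht2 (1 + j) (by omega) (by omega)).trans (ih (by omega))
    have htge : ∀ j, j ≤ 2 * k → t (2 * k + 1) ≤ t (2 * k + 1 - j) := by
      intro j
      induction j with
      | zero => intro _; exact le_rfl
      | succ j ih =>
        intro h
        have h1 := ht2 (2 * k + 1 - (j + 1)) (by omega) (by omega)
        rw [show 2 * k + 1 - (j + 1) + 1 = 2 * k + 1 - j by omega] at h1
        exact (ih (by omega)).trans h1
    have hs := ht3 (2 * k + 1) (by omega) le_rfl
    have e1 : ∑ i ∈ Finset.Icc (l + 1) m, z i ≤ k * c := by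
      have h1 : ∑ i ∈ Finset.Icc (l + 1) m, z i ≤ ∑ i ∈ Finset.Icc (l + 1) m, c := by
        apply Finset.sum_le_sum
        intro i hi
        rw [Finset.mem_Icc] at hi
        have := hzle (i - (l + 1)) (by omega)
        rwa [show l + 1 + (i - (l + 1)) = i by omega] at this
      have : m + 1 - (l + 1) = k := by omega
      simpa [this] using h1
    have e2 : tsize n l t ≤ 2 * k * l + t (2 * k + 1) := by
      unfold tsize
      rw [hN, Finset.sum_Icc_succ_top (by omega)]
      have h1 : ∑ i ∈ Finset.Icc 1 (2 * k), t i ≤ ∑ i ∈ Finset.Icc 1 (2 * k), (l : ℤ) := by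
        apply Finset.sum_le_sum
        intro i hi
        rw [Finset.mem_Icc] at hi
        have := htle (i - 1) (by omega)
        rwa [show 1 + (i - 1) = i by omega] at this
      simp at h1
      linarith
    have hT := tele_aux (fun i => zdub z (2 * l + i) - 2 * t i) (2 * k)
    have z1 : zdub z (2 * l + 1) = c := by
      unfold zdub
      exact hzc _ (by omega) (by omega)
    have z2 : zdub z (2 * l + (2 * k + 1)) = 0 := by
      unfold zdub
      exact hz3 _ (by omega)
    simp only [z1, z2, ht1] at hT
    have hD : 0 ≤ c - 2 * (l : ℤ) + 2 * t (2 * k + 1) := by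
      have : 0 ≤ ∑ i ∈ Finset.Icc 1 (2 * k), (zdub z (2 * l + i) - 2 * t i
          - (zdub z (2 * l + (i + 1)) - 2 * t (i + 1))) := by
        apply Finset.sum_nonneg
        intro i hi
        rw [Finset.mem_Icc] at hi
        have := ht5 i hi.1 hi.2
        rw [add_assoc] at this
        linarith
      linarith
    have e3 : t (2 * k + 1) * (c - 2 * (l : ℤ) + 2 * t (2 * k + 1)) ≤ ffun n l z t := by
      have : c - 2 * (l : ℤ) + 2 * t (2 * k + 1) = ∑ i ∈ Finset.Icc 1 (2 * k),
          (zdub z (2 * l + i) - 2 * t i - (zdub z (2 * l + (i + 1)) - 2 * t (i + 1))) := by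
        rw [hT]; ring
      rw [this]
      unfold ffun
      rw [hN1, Finset.mul_sum]
      apply Finset.sum_le_sum
      intro i hi
      rw [Finset.mem_Icc] at hi
      have h1 := ht5 i hi.1 hi.2
      have h2 := htge (2 * k - i) (by omega)
      rw [show 2 * k + 1 - (2 * k - i) = i + 1 by omega] at h2
      rw [add_assoc] at h1 ⊢
      have := mul_le_mul_of_nonneg_right h2 (sub_nonneg.mpr h1)
      linarith
    have := upper_aux k l c (t (2 * k + 1)) _ hs hD rfl hc n hn2
    linarith
end

section
/- Let n ≥ 2, m = ⌊n/2⌋, 0 ≤ l ≤ m−1, z ∈ P(m) with z_1 = z_2 = ... = z_{l+1}, and t ∈ T_l(z). Define N = Σ_{i=1}^{n−2l−1} (2t_i − 2t_{i+1} + 1)(z^{(2)}_{2l+i} + n − 1 − 2t_i) + (2t_{n−2l} + 1)(z^{(2)}_n + n − 1 − 2t_{n−2l}). Then N/2 − C(n,2) + C(2l,2) + 2|t| = Σ_{i=l+1}^{m} z_i + l(z_1 − 1) + |t| − f_l(z,t), where C(a,2) = a(a−1)/2 denotes the binomial coefficient. -/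
theorem aux_tel (t w : ℕ → ℤ) (c : ℤ) (k : ℕ) :
    (∑ i ∈ Finset.Icc 1 k, (2 * t i - 2 * t (i + 1) + 1) * (w i + c - 1 - 2 * t i))
      + (2 * t (k + 1) + 1) * (w (k + 1) + c - 1 - 2 * t (k + 1))
      + 2 * (∑ i ∈ Finset.Icc 1 k, t (i + 1) * ((w i - w (i + 1)) - (2 * t i - 2 * t (i + 1))))
      + 2 * (∑ i ∈ Finset.Icc 1 (k + 1), t i)
    = 2 * t 1 * w 1 - 4 * t 1 ^ 2 + (∑ i ∈ Finset.Icc 1 (k + 1), w i) + 2 * (c - 1) * t 1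
      + (c - 1) * (k + 1) := by
  induction k with
  | zero => simp; ring
  | succ k ih =>
    have h : 1 ≤ k + 1 := by omega
    rw [Finset.sum_Icc_succ_top h, Finset.sum_Icc_succ_top h,
      Finset.sum_Icc_succ_top (by omega : 1 ≤ k + 1 + 1) t,
      Finset.sum_Icc_succ_top (by omega : 1 ≤ k + 1 + 1) w]
    push_cast
    linear_combination ih

theorem aux_dub (z : ℕ → ℤ) (l q : ℕ) :
    ∑ i ∈ Finset.Icc 1 (2 * q), zdub z (2 * l + i) = 2 * ∑ i ∈ Finset.Icc (l + 1) (l + q), z i := by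
  induction q with
  | zero => simp
  | succ q ih =>
    rw [show 2 * (q + 1) = 2 * q + 1 + 1 by ring, Finset.sum_Icc_succ_top (by omega),
      Finset.sum_Icc_succ_top (by omega), ih, ← add_assoc l q 1,
      Finset.sum_Icc_succ_top (by omega)]
    unfold zdub
    rw [show (2 * l + (2 * q + 1) + 1) / 2 = l + q + 1 by omega,
      show (2 * l + (2 * q + 1 + 1) + 1) / 2 = l + q + 1 by omega]
    ring

/-- The computational identity concluding the proof of Theorem 3.4: with
`N = Σ_{i=1}^{n-2l-1} (2t_i - 2t_{i+1} + 1)(z^{(2)}_{2l+i} + n - 1 - 2t_i)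
  + (2t_{n-2l} + 1)(z^{(2)}_n + n - 1 - 2t_{n-2l})`, one has
`N/2 - C(n,2) + C(2l,2) + 2|t| = Σ_{i=l+1}^m z_i + l(z₁-1) + |t| - f_l(z,t)`. -/
theorem reg_identity (n m l : ℕ) (z t : ℕ → ℤ) (h2 : 2 ≤ n) (hm : m = n / 2)
    (hl : l ≤ m - 1) (hz : IsPart m z) (hzc : ∀ i, 1 ≤ i → i ≤ l + 1 → z i = z 1)
    (ht : t ∈ Tset n l z) :
    ((∑ i ∈ Finset.Icc 1 (n - 2 * l - 1),
        (2 * t i - 2 * t (i + 1) + 1) * (zdub z (2 * l + i) + (n : ℤ) - 1 - 2 * t i)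
      + (2 * t (n - 2 * l) + 1) * (zdub z n + (n : ℤ) - 1 - 2 * t (n - 2 * l)) : ℤ) : ℚ) / 2
      - (n.choose 2 : ℚ) + ((2 * l).choose 2 : ℚ) + 2 * (tsize n l t : ℚ)
    = (((∑ i ∈ Finset.Icc (l + 1) m, z i) + (l : ℤ) * (z 1 - 1)
        + tsize n l t - ffun n l z t : ℤ) : ℚ) := by
  obtain ⟨k, rfl⟩ : ∃ k, n = 2 * l + k + 1 := ⟨n - 2 * l - 1, by omega⟩
  have e1 : 2 * l + k + 1 - 2 * l - 1 = k := by omega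
  have e2 : 2 * l + k + 1 - 2 * l = k + 1 := by omega
  have ht1 : t 1 = l := ht.1
  have hw : ∑ i ∈ Finset.Icc 1 (k + 1), zdub z (2 * l + i)
      = 2 * ∑ i ∈ Finset.Icc (l + 1) m, z i := by
    rcases Nat.even_or_odd' (k + 1) with ⟨q, hq | hq⟩
    · rw [hq, aux_dub, show m = l + q by omega]
    · rw [hq, Finset.sum_Icc_succ_top (by omega), aux_dub, show m = l + q by omega]
      have : zdub z (2 * l + (2 * q + 1)) = 0 := hz.2.2 _ (Or.inr (by omega))
      rw [this, add_zero]
  have hw1 : zdub z (2 * l + 1) = z 1 := by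
    unfold zdub
    exact hzc _ (by omega) (by omega)
  have key := aux_tel t (fun i => zdub z (2 * l + i)) ((2 * l + k + 1 : ℕ) : ℤ) k
  simp only [hw, hw1, ht1] at key
  unfold tsize ffun
  rw [e1, e2, Nat.cast_choose_two, Nat.cast_choose_two]
  have keyQ := congrArg (fun x : ℤ => (x : ℚ)) key
  simp only [← add_assoc] at keyQ ⊢
  push_cast at keyQ ⊢
  linear_combination keyQ / 2
end

section
/- Let n ≥ 2, m = ⌊n/2⌋, 0 ≤ l ≤ m−1, z ∈ P(m) with z_1 = z_2 = ... = z_{l+1}, and t ∈ T_l(z). Then the set W(z,l,t) is nonempty, the function λ ↦ |λ| is bounded above on W(z,l,t), and its maximum over W(z,l,t) equals Σ_{i=1}^{n−2l−1} (2t_i − 2t_{i+1} + 1)(z^{(2)}_{2l+i} + n − 1 − 2t_i) + (2t_{n−2l} + 1)(z^{(2)}_n + n − 1 − 2t_{n−2l}). -/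
/-- The set `W(z,l,t)` of dominant weights `λ = (λ₁ ≥ ⋯ ≥ λ_n) ∈ ℤⁿ` (1-indexed) with
`λ_{2l+i-2t_i} = z^{(2)}_{2l+i} + n - 1 - 2t_i` for `i = 1,…,n-2l`,
`λ_{2i} = λ_{2i-1}` for `0 < 2i < n - 2t_{n-2l}`, and
`λ_{n-2i} = λ_{n-2i-1}` for `0 ≤ i ≤ t_{n-2l} - 1`. -/
def Wset (n l : ℕ) (z t : ℕ → ℤ) : Set (ℕ → ℤ) :=
  { lam | (∀ i, 1 ≤ i → i < n → lam (i + 1) ≤ lam i) ∧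
    (∀ i, 1 ≤ i → i ≤ n - 2 * l →
      lam (2 * l + i - 2 * (t i).toNat) = zdub z (2 * l + i) + (n : ℤ) - 1 - 2 * t i) ∧
    (∀ i, 0 < 2 * i → 2 * i < n - 2 * (t (n - 2 * l)).toNat →
      lam (2 * i) = lam (2 * i - 1)) ∧
    (∀ i : ℕ, (i : ℤ) ≤ t (n - 2 * l) - 1 → lam (n - 2 * i) = lam (n - 2 * i - 1)) }


theorem sum_blocks (p : ℕ → ℕ) (f : ℕ → ℤ) (N : ℕ)
    (hp : ∀ i, 1 ≤ i → i ≤ N → p i ≤ p (i + 1)) :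
    p 1 ≤ p (N + 1) ∧ ∑ j ∈ Finset.Ico (p 1) (p (N + 1)), f j =
      ∑ i ∈ Finset.Icc 1 N, ∑ j ∈ Finset.Ico (p i) (p (i + 1)), f j := by
  induction N with
  | zero => simp
  | succ N ih =>
    obtain ⟨h1, h3⟩ := ih (fun i a b => hp i a (by omega))
    have h4 := hp (N + 1) (by omega) le_rfl
    refine ⟨h1.trans h4, ?_⟩
    rw [Finset.sum_Icc_succ_top (by omega), ← h3, Finset.sum_Ico_consecutive _ h1 h4]

theorem mono_of_step (p : ℕ → ℤ) (N : ℕ)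
    (hp : ∀ i, 1 ≤ i → i < N → p i ≤ p (i + 1)) (i j : ℕ) (hi : 1 ≤ i) (hij : i ≤ j) (hj : j ≤ N) :
    p i ≤ p j := by
  induction j, hij using Nat.le_induction with
  | base => exact le_rfl
  | succ k hk ih => exact (ih (by omega)).trans (hp k (by omega) (by omega))

/-- In the proof of Theorem 3.6: for `t ∈ 𝒯_l(z)`, the set `W(z,l,t)` is nonempty,
`λ ↦ |λ|` is bounded above on it, and its maximum equals
`Σ_{i=1}^{n-2l-1} (2t_i - 2t_{i+1} + 1)(z^{(2)}_{2l+i} + n - 1 - 2t_i)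
  + (2t_{n-2l} + 1)(z^{(2)}_n + n - 1 - 2t_{n-2l})`. -/
theorem Wset_max (n m l : ℕ) (z t : ℕ → ℤ) (h2 : 2 ≤ n) (hm : m = n / 2)
    (hl : l ≤ m - 1) (hz : IsPart m z) (hzc : ∀ i, 1 ≤ i → i ≤ l + 1 → z i = z 1)
    (ht : t ∈ Tset n l z) :
    IsGreatest ((fun lam => ∑ i ∈ Finset.Icc 1 n, lam i) '' Wset n l z t)
      (∑ i ∈ Finset.Icc 1 (n - 2 * l - 1),
          (2 * t i - 2 * t (i + 1) + 1) * (zdub z (2 * l + i) + (n : ℤ) - 1 - 2 * t i)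
        + (2 * t (n - 2 * l) + 1) * (zdub z n + (n : ℤ) - 1 - 2 * t (n - 2 * l))) := by
  obtain ⟨t1, tdec, tnn, tz, tzd⟩ := ht
  obtain ⟨N, hN⟩ : ∃ N, N = n - 2 * l := ⟨_, rfl⟩
  rw [← hN] at tdec tnn tz tzd
  have hn : n = 2 * l + N := by omega
  have hN2 : 2 ≤ N := by omega
  obtain ⟨p, hpdef⟩ : ∃ p : ℕ → ℕ, ∀ i, p i = 2 * l + i - 2 * (t i).toNat := ⟨_, fun _ => rfl⟩
  obtain ⟨a, hadef⟩ : ∃ a : ℕ → ℤ, ∀ i, a i = zdub z (2 * l + i) + (n : ℤ) - 1 - 2 * t i :=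
    ⟨_, fun _ => rfl⟩
  have tN1 : t (N + 1) = 0 := tz _ (by omega)
  have tle : ∀ i, 1 ≤ i → i ≤ N + 1 → 0 ≤ t i ∧ t i ≤ l := by
    intro i h1 h3
    rcases Nat.lt_or_ge N i with h | h
    · have := tz i (by omega); omega
    · have := mono_of_step (fun i => - t i) N
        (fun i a b => by have := tdec i a b; omega) 1 i le_rfl h1 h
      have := tnn i h1 h
      omega
  have hp : ∀ i, 1 ≤ i → i ≤ N + 1 → (p i : ℤ) = 2 * l + i - 2 * t i := by
    intro i h1 h3
    have := tle i h1 h3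
    have := hpdef i
    omega
  have p1 : p 1 = 1 := by have := hp 1 (by omega) (by omega); omega
  have pN : p (N + 1) = n + 1 := by have := hp (N + 1) (by omega) (by omega); omega
  have tdec' : ∀ i, 1 ≤ i → i ≤ N → t (i + 1) ≤ t i := by
    intro i h1 h3
    rcases Nat.lt_or_ge i N with h | h
    · exact tdec i h1 h
    · have := tnn i h1 h3
      have := tz (i + 1) (by omega); omega
  have pstep : ∀ i, 1 ≤ i → i ≤ N → (p (i + 1) : ℤ) = p i + (2 * t i - 2 * t (i + 1) + 1) := by
    intro i h1 h3
    have := hp i h1 (by omega)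
    have := hp (i + 1) (by omega) (by omega)
    push_cast at *
    omega
  have plt : ∀ i, 1 ≤ i → i ≤ N → p i < p (i + 1) := by
    intro i h1 h3
    have := pstep i h1 h3
    have := tdec' i h1 h3
    omega
  have pmono : ∀ i j, 1 ≤ i → i ≤ j → j ≤ N + 1 → p i ≤ p j := by
    intro i j h1 h3 h4
    have := mono_of_step (fun i => (p i : ℤ)) (N + 1)
      (fun i a b => by have := plt i a (by omega); omega) i j h1 h3 h4
    omega
  have astep : ∀ i, 1 ≤ i → i < N → a (i + 1) ≤ a i := by
    intro i h1 h3
    have := tzd i h1 (by omega)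
    have := hadef i
    have := hadef (i + 1)
    rw [← add_assoc] at this
    omega
  have amono : ∀ i j, 1 ≤ i → i ≤ j → j ≤ N → a j ≤ a i := by
    intro i j h1 h3 h4
    have := mono_of_step (fun i => - a i) N
      (fun i a b => by have := astep i a (by omega); omega) i j h1 h3 h4
    omega
  -- parity step
  have aeven : ∀ k, 1 ≤ k → k < N → k % 2 = 1 → t (k + 1) = t k ∧ a (k + 1) = a k := by
    intro k h1 h3 h4
    have e1 := tzd k h1 (by omega)
    have e2 := tdec k h1 h3
    have e3 := hadef k
    have e4 := hadef (k + 1)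
    rw [← add_assoc] at e4
    have e5 : zdub z (2 * l + k) = zdub z (2 * l + k + 1) := by
      unfold zdub
      congr 1
      omega
    omega
  have hform : (∑ i ∈ Finset.Icc 1 (n - 2 * l - 1),
          (2 * t i - 2 * t (i + 1) + 1) * (zdub z (2 * l + i) + (n : ℤ) - 1 - 2 * t i)
        + (2 * t (n - 2 * l) + 1) * (zdub z n + (n : ℤ) - 1 - 2 * t (n - 2 * l)))
      = ∑ i ∈ Finset.Icc 1 N, ∑ j ∈ Finset.Ico (p i) (p (i + 1)), a i := by
    have e1 : ∑ i ∈ Finset.Icc 1 N, ∑ j ∈ Finset.Ico (p i) (p (i + 1)), a i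
        = ∑ i ∈ Finset.Icc 1 N, (2 * t i - 2 * t (i + 1) + 1) * a i := by
      apply Finset.sum_congr rfl
      intro i hi
      rw [Finset.mem_Icc] at hi
      have e2 := pstep i hi.1 hi.2
      have e3 := plt i hi.1 hi.2
      rw [Finset.sum_const, Nat.card_Ico, nsmul_eq_mul, Nat.cast_sub e3.le, e2]
      ring
    rw [e1, ← hN]
    obtain ⟨M, rfl⟩ : ∃ M, N = M + 1 := ⟨N - 1, by omega⟩
    rw [Finset.sum_Icc_succ_top (by omega), tN1, hadef (M + 1), ← hn]
    simp only [hadef, Nat.add_sub_cancel]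
    ring
  have hsum : ∀ f : ℕ → ℤ, ∑ i ∈ Finset.Icc 1 n, f i =
      ∑ i ∈ Finset.Icc 1 N, ∑ j ∈ Finset.Ico (p i) (p (i + 1)), f j := by
    intro f
    rw [← (sum_blocks p f N (fun i a b => (plt i a b).le)).2, p1, pN]
    rfl
  rw [hform]
  constructor
  · obtain ⟨idx, hidx⟩ : ∃ idx : ℕ → ℕ, ∀ j, idx j = Nat.findGreatest (fun i => p i ≤ j) N :=
      ⟨_, fun _ => rfl⟩
    have idxN : ∀ j, idx j ≤ N := fun j => by rw [hidx]; exact Nat.findGreatest_le _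
    have idx1 : ∀ j, 1 ≤ j → 1 ≤ idx j := fun j hj => by
      rw [hidx]; exact Nat.le_findGreatest (by omega) (by omega)
    have idxp : ∀ j, 1 ≤ j → p (idx j) ≤ j := fun j hj => by
      rw [hidx]
      exact Nat.findGreatest_spec (P := fun i => p i ≤ j) (m := 1) (by omega) (by omega)
    have idxeq : ∀ i j, 1 ≤ i → i ≤ N → p i ≤ j → j < p (i + 1) → idx j = i := by
      intro i j h1 h3 h4 h5
      have g1 : i ≤ idx j := by rw [hidx]; exact Nat.le_findGreatest h3 h4
      by_contra hne
      have := pmono (i + 1) (idx j) (by omega) (by omega) (by have := idxN j; omega)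
      have := idxp j (by have := pmono 1 i le_rfl h1 (by omega); omega)
      omega
    refine ⟨fun j => a (idx j), ⟨?_, ?_, ?_, ?_⟩, ?_⟩
    · intro i h1 h3
      apply amono _ _ (idx1 i h1) _ (idxN _)
      rw [hidx (i + 1)]
      exact Nat.le_findGreatest (idxN i) ((idxp i h1).trans (by omega))
    · intro i h1 h3
      simp only
      rw [← hpdef, ← hadef, idxeq i _ h1 (by omega) le_rfl (plt i h1 (by omega))]
    · intro i h1 h3
      simp only
      rw [← hN] at h3
      have hi1 : 1 ≤ i := by omega
      have g1 := idx1 (2 * i) (by omega)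
      have g2 := idxN (2 * i)
      have g3 := idxp (2 * i) (by omega)
      have g4 : 2 * i < p (idx (2 * i) + 1) := by
        by_contra hcon
        rcases Nat.lt_or_ge (idx (2 * i)) N with h | h
        · have : idx (2 * i) + 1 ≤ idx (2 * i) := by
            conv_rhs => rw [hidx]
            exact Nat.le_findGreatest h (by omega)
          omega
        · have : idx (2 * i) = N := by omega
          rw [this, pN] at hcon
          omega
      generalize idx (2 * i) = k at *
      rcases Nat.lt_or_ge (p k) (2 * i) with h | h
      · rw [idxeq k (2 * i - 1) g1 g2 (by omega) (by omega)]
      · have hk := hp k g1 (by omega)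
        have k2 : k ≠ 1 := by
          rintro rfl
          omega
        obtain ⟨r, rfl⟩ : ∃ r, k = r + 1 := ⟨k - 1, by omega⟩
        have e := aeven r (by omega) (by omega) (by omega)
        have e2 := pstep r (by omega) (by omega)
        rw [idxeq r (2 * i - 1) (by omega) (by omega) (by omega) (by omega), e.2]
    · intro i hi
      simp only
      rw [← hN] at hi
      have e1 := hp N (by omega) (by omega)
      have e2 := tle N (by omega) (by omega)
      rw [idxeq N (n - 2 * i) (by omega) le_rfl (by omega) (by omega),
        idxeq N (n - 2 * i - 1) (by omega) le_rfl (by omega) (by omega)]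
    · simp only
      rw [hsum]
      apply Finset.sum_congr rfl
      intro i hi
      rw [Finset.mem_Icc] at hi
      apply Finset.sum_congr rfl
      intro j hj
      rw [Finset.mem_Ico] at hj
      rw [idxeq i j hi.1 hi.2 hj.1 hj.2]
  · rintro _ ⟨lam, ⟨hdec, hval, -, -⟩, rfl⟩
    simp only
    rw [hsum]
    apply Finset.sum_le_sum
    intro i hi
    rw [Finset.mem_Icc] at hi
    apply Finset.sum_le_sum
    intro j hj
    rw [Finset.mem_Ico] at hj
    have e1 := hval i hi.1 (by omega)
    rw [← hpdef, ← hadef] at e1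
    rw [← e1]
    have e2 := pmono 1 i le_rfl hi.1 (by omega)
    have e3 := pmono (i + 1) (N + 1) (by omega) (by omega) le_rfl
    have := mono_of_step (fun i => - lam i) n
      (fun i a b => by have := hdec i a b; omega) (p i) j (by omega) hj.1 (by omega)
    omega
end

section
/- Let n ≥ 2, m = ⌊n/2⌋, 0 ≤ l ≤ m−1, z ∈ P(m) with z_1 = ... = z_{l+1}, t ∈ T_l(z), and λ ∈ W(z,l,t). If |λ| < n(n−1), then l ≥ 1, t_i ≥ 1 for all 1 ≤ i ≤ n−2l, and C(2l,2) + 2·Σ_{i=1}^{n−2l} t_i ≥ 2n − 3, where C(a,2) = a(a−1)/2. (This is the combinatorial core of the Kodaira-type vanishing H^q(Y, O_Y(−j)) = 0 for q < 2n−4 and j > 0 for GL-equivariant Pfaffian thickenings Y.) -/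
/-- The combinatorial core of Theorem E (Kodaira vanishing for Pfaffian thickenings):
if `λ ∈ W(z,l,t)` has `|λ| < n(n-1)`, then `l ≥ 1`, all `t_i ≥ 1`, and
`C(2l,2) + 2Σ_{i=1}^{n-2l} t_i ≥ 2n - 3`. -/
theorem kodaira_core (n m l : ℕ) (z t lam : ℕ → ℤ) (h2 : 2 ≤ n) (hm : m = n / 2)
    (hl : l ≤ m - 1) (hz : IsPart m z) (hzc : ∀ i, 1 ≤ i → i ≤ l + 1 → z i = z 1)
    (ht : t ∈ Tset n l z) (hlam : lam ∈ Wset n l z t)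
    (hsize : ∑ i ∈ Finset.Icc 1 n, lam i < (n : ℤ) * ((n : ℤ) - 1)) :
    1 ≤ l ∧ (∀ i, 1 ≤ i → i ≤ n - 2 * l → 1 ≤ t i) ∧
      2 * (n : ℤ) - 3 ≤ ((2 * l).choose 2 : ℤ) + 2 * tsize n l t := by
  obtain ⟨_, hz0, hzz⟩ := hz
  obtain ⟨t1, tmono, t0, _, _⟩ := ht
  obtain ⟨lmono, leq, _, _⟩ := hlam
  have hN : 2 * l + 2 ≤ n := by omega
  have hs : 1 ≤ t (n - 2 * l) := by
    by_contra hcon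
    have hnn := t0 (n - 2 * l) (by omega) le_rfl
    have hz' : t (n - 2 * l) = 0 := by omega
    have h := leq (n - 2 * l) (by omega) le_rfl
    rw [hz'] at h
    have e : 2 * l + (n - 2 * l) = n := by omega
    rw [e] at h
    simp only [Int.toNat_zero, mul_zero, Nat.sub_zero, sub_zero] at h
    have hzn : 0 ≤ zdub z n := by
      unfold zdub
      by_cases hc : (n + 1) / 2 ≤ m
      · exact hz0 _ (by omega) hc
      · exact (hzz _ (Or.inr (by omega))).ge
    have hall : ∀ k, k < n → lam n ≤ lam (n - k) := by
      intro k
      induction k with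
      | zero => intro _; simp
      | succ k ih =>
        intro hk
        have h1 := ih (by omega)
        have h2 := lmono (n - (k + 1)) (by omega) (by omega)
        have e2 : n - (k + 1) + 1 = n - k := by omega
        rw [e2] at h2
        exact h1.trans h2
    have hsum : ∑ i ∈ Finset.Icc 1 n, ((n : ℤ) - 1) ≤ ∑ i ∈ Finset.Icc 1 n, lam i := by
      apply Finset.sum_le_sum
      intro i hi
      rw [Finset.mem_Icc] at hi
      have h3 := hall (n - i) (by omega)
      have e3 : n - (n - i) = i := by omega
      rw [e3] at h3
      linarith
    simp only [Finset.sum_const, Nat.card_Icc, Nat.add_sub_cancel, nsmul_eq_mul] at hsum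
    linarith
  have htall : ∀ k, k < n - 2 * l → 1 ≤ t (n - 2 * l - k) := by
    intro k
    induction k with
    | zero => intro _; simpa using hs
    | succ k ih =>
      intro hk
      have h1 := ih (by omega)
      have h2 := tmono (n - 2 * l - (k + 1)) (by omega) (by omega)
      have e2 : n - 2 * l - (k + 1) + 1 = n - 2 * l - k := by omega
      rw [e2] at h2
      exact h1.trans h2
  have hti : ∀ i, 1 ≤ i → i ≤ n - 2 * l → 1 ≤ t i := by
    intro i h1 h3
    have h4 := htall (n - 2 * l - i) (by omega)
    have e3 : n - 2 * l - (n - 2 * l - i) = i := by omega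
    rwa [e3] at h4
  have hl1 : 1 ≤ l := by
    have := hti 1 le_rfl (by omega)
    omega
  refine ⟨hl1, hti, ?_⟩
  have hts : (l : ℤ) + ((n : ℤ) - 2 * l - 1) ≤ tsize n l t := by
    unfold tsize
    have hm1 : 1 ∈ Finset.Icc 1 (n - 2 * l) := by
      rw [Finset.mem_Icc]; omega
    rw [← Finset.add_sum_erase _ _ hm1, t1]
    have hsum : ∑ i ∈ (Finset.Icc 1 (n - 2 * l)).erase 1, (1 : ℤ)
        ≤ ∑ i ∈ (Finset.Icc 1 (n - 2 * l)).erase 1, t i := by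
      apply Finset.sum_le_sum
      intro i hi
      have hi' := Finset.mem_Icc.1 (Finset.mem_of_mem_erase hi)
      exact hti i hi'.1 hi'.2
    rw [Finset.sum_const, Finset.card_erase_of_mem hm1, Nat.card_Icc] at hsum
    simp only [nsmul_eq_mul, mul_one] at hsum
    omega
  have hch : ((2 * l).choose 2 : ℤ) = l * (2 * l - 1) := by
    have h := Nat.choose_two_right (2 * l)
    have e : 2 * l * (2 * l - 1) / 2 = l * (2 * l - 1) := by
      rw [mul_assoc]; exact Nat.mul_div_cancel_left _ (by norm_num)
    rw [h, e]
    push_cast [Nat.cast_sub (show 1 ≤ 2 * l by omega)]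
    ring
  rw [hch]
  have hl' : (1 : ℤ) ≤ l := by exact_mod_cast hl1
  nlinarith [mul_nonneg (by linarith : (0 : ℤ) ≤ 2 * l - 1) (by linarith : (0 : ℤ) ≤ (l : ℤ) - 1)]
end

section
/- Let n ≥ 2, m = ⌊n/2⌋, 0 ≤ l ≤ m−1, and z ∈ P(m) with z_1 = ... = z_{l+1}. Let α = (α_1 ≥ α_2 ≥ ... ≥ α_{2l}) ∈ ℤ^{2l} satisfy α_{2i−1} = α_{2i} for 1 ≤ i ≤ l and α_1 ≤ z_1 + n − 2l. Let β ∈ ℤ^{n−2l} be defined by β_i = z^{(2)}_{2l+i} + n − 1, let γ = (α_1,...,α_{2l},β_1,...,β_{n−2l}) ∈ ℤ^n, and ρ = (n−1, n−2, ..., 1, 0). Assume the entries of γ+ρ are pairwise distinct, and let σ be the unique permutation of {1,...,n} such that the sequence γ̄ defined by γ̄_{σ(i)} = (γ+ρ)_i is strictly decreasing. Then: (a) σ(2l+1) = 1; (b) for each 1 ≤ i ≤ n−2l, u_i := 2l + i − σ(2l+i) is a nonnegative even integer; and (c) the sequence t = (u_1/2, u_2/2, ..., u_{n−2l}/2) belongs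 to T_l(z). -/
theorem even_card_aux (P : ℕ → Prop) [DecidablePred P] (l : ℕ)
    (h : ∀ k, 1 ≤ k → k ≤ l → (P (2 * k - 1) ↔ P (2 * k))) :
    Even ((Finset.Icc 1 (2 * l)).filter P).card := by
  induction l with
  | zero => simp
  | succ l ih =>
    have ih' := ih (fun k h1 h2 => h k h1 (by omega))
    have hk := h (l + 1) (by omega) le_rfl
    have e1 : 2 * (l + 1) - 1 = 2 * l + 1 := by omega
    have e2 : 2 * (l + 1) = 2 * l + 1 + 1 := by ring
    rw [e1, e2] at hk
    rw [e2, ← Finset.insert_Icc_right_eq_Icc_add_one (by omega),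
      ← Finset.insert_Icc_right_eq_Icc_add_one (by omega),
      Finset.filter_insert, Finset.filter_insert]
    by_cases hp : P (2 * l + 1 + 1)
    · have hq := hk.2 hp
      rw [if_pos hp, if_pos hq, Finset.card_insert_of_notMem (by simp),
        Finset.card_insert_of_notMem (by simp)]
      rw [add_assoc]
      exact ih'.add (by decide)
    · have hq : ¬ P (2 * l + 1) := fun q => hp (hk.1 q)
      rw [if_neg hp, if_neg hq]
      exact ih'

/-- Claims 1 and 2 in the proof of Theorem 3.4: for `γ = (α,β)` with `α` a dominant
weight with pairwise equal consecutive entries and `α₁ ≤ z₁ + n - 2l`, and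
`β_i = z^{(2)}_{2l+i} + n - 1`, if `γ + ρ` has distinct entries and `σ` is the unique
permutation of `{1,…,n}` sorting `γ + ρ` into strictly decreasing order
(so `σ i < σ j ↔ (γ+ρ)_i > (γ+ρ)_j`), then `σ(2l+1) = 1`, each displacement
`u_i = 2l + i - σ(2l+i)` is a nonnegative even integer, and
`t = (u₁/2, …, u_{n-2l}/2)` belongs to `𝒯_l(z)`. -/
theorem bott_sorting (n m l : ℕ) (z α γ : ℕ → ℤ) (σ : ℕ → ℕ)
    (h2 : 2 ≤ n) (hm : m = n / 2) (hl : l ≤ m - 1)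
    (hz : IsPart m z) (hzc : ∀ i, 1 ≤ i → i ≤ l + 1 → z i = z 1)
    (hα1 : ∀ i, 1 ≤ i → i < 2 * l → α (i + 1) ≤ α i)
    (hα2 : ∀ i, 1 ≤ i → i ≤ l → α (2 * i - 1) = α (2 * i))
    (hα3 : α 1 ≤ z 1 + (n : ℤ) - 2 * (l : ℤ))
    (hγ : ∀ i, 1 ≤ i → i ≤ n →
      γ i = if i ≤ 2 * l then α i else zdub z i + (n : ℤ) - 1)
    (hdist : ∀ i ∈ Finset.Icc 1 n, ∀ j ∈ Finset.Icc 1 n, i ≠ j →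
      γ i + ((n : ℤ) - (i : ℤ)) ≠ γ j + ((n : ℤ) - (j : ℤ)))
    (hσbij : Set.BijOn σ (Set.Icc 1 n) (Set.Icc 1 n))
    (hσ : ∀ i ∈ Finset.Icc 1 n, ∀ j ∈ Finset.Icc 1 n,
      (σ i < σ j ↔ γ j + ((n : ℤ) - (j : ℤ)) < γ i + ((n : ℤ) - (i : ℤ)))) :
    σ (2 * l + 1) = 1 ∧
    (∀ i, 1 ≤ i → i ≤ n - 2 * l →
      σ (2 * l + i) ≤ 2 * l + i ∧ Even (2 * l + i - σ (2 * l + i))) ∧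
    (fun i => if 1 ≤ i ∧ i ≤ n - 2 * l then
        (((2 * l + i - σ (2 * l + i)) / 2 : ℕ) : ℤ) else 0) ∈ Tset n l z := by
  obtain ⟨hz1, hz2, hz3⟩ := hz
  have hln : 2 * l + 2 ≤ n := by omega
  have hzs : ∀ i, 1 ≤ i → z (i + 1) ≤ z i := by
    intro i hi
    rcases lt_trichotomy i m with h | h | h
    · exact hz1 i hi h
    · rw [hz3 (i + 1) (by omega)]; exact hz2 i hi h.le
    · rw [hz3 (i + 1) (by omega), hz3 i (by omega)]
  have hzd : ∀ j, 1 ≤ j → zdub z (j + 1) ≤ zdub z j := by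
    intro j hj
    unfold zdub
    rcases Nat.even_or_odd' j with ⟨k, rfl | rfl⟩
    · have e1 : (2 * k + 1 + 1) / 2 = k + 1 := by omega
      have e2 : (2 * k + 1) / 2 = k := by omega
      rw [e1, e2]; exact hzs k (by omega)
    · have e1 : (2 * k + 1 + 1 + 1) / 2 = k + 1 := by omega
      have e2 : (2 * k + 1 + 1) / 2 = k + 1 := by omega
      rw [e1, e2]
  obtain ⟨a, ha⟩ : ∃ a : ℕ → ℤ, ∀ i, a i = γ i + ((n : ℤ) - (i : ℤ)) := ⟨_, fun _ => rfl⟩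
  simp only [← ha, Finset.mem_Icc] at hdist hσ
  have haL : ∀ i, 1 ≤ i → i ≤ 2 * l → a i = α i + ((n : ℤ) - i) := by
    intro i h1 h3
    rw [ha, hγ i h1 (by omega), if_pos h3]
  have haR : ∀ i, 2 * l < i → i ≤ n → a i = zdub z i + (n : ℤ) - 1 + ((n : ℤ) - i) := by
    intro i h1 h3
    rw [ha, hγ i (by omega) h3, if_neg (by omega)]
  have hzm : ∀ d j, 1 ≤ j → zdub z (j + d) ≤ zdub z j := by
    intro d
    induction d with
    | zero => intro j _; exact le_rfl
    | succ d ih => intro j hj; exact (hzd (j + d) (by omega)).trans (ih j hj)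
  have haD : ∀ i j, 2 * l < i → i < j → j ≤ n → a j < a i := by
    intro i j h1 h3 h4
    rw [haR i h1 (by omega), haR j (by omega) h4]
    obtain ⟨d, rfl⟩ := Nat.exists_eq_add_of_lt h3
    have := hzm (d + 1) i (by omega)
    rw [← add_assoc] at this
    push_cast
    linarith
  have hpair : ∀ k, 1 ≤ k → k ≤ l → a (2 * k - 1) = a (2 * k) + 1 := by
    intro k h1 h3
    rw [haL _ (by omega) (by omega), haL _ (by omega) (by omega), hα2 k h1 h3]
    have : ((2 * k - 1 : ℕ) : ℤ) = 2 * (k : ℤ) - 1 := by omega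
    rw [this]; push_cast; ring
  have hα : ∀ j, 1 ≤ j → j ≤ 2 * l → α j ≤ α 1 := by
    intro j h1
    induction j, h1 using Nat.le_induction with
    | base => intro _; exact le_rfl
    | succ j hj ih => intro h; exact (hα1 j hj (by omega)).trans (ih (by omega))
  have htop : ∀ j, 1 ≤ j → j ≤ 2 * l → a j < a (2 * l + 1) := by
    intro j h1 h3
    have hb := haR (2 * l + 1) (by omega) (by omega)
    have hz' : zdub z (2 * l + 1) = z 1 := by
      unfold zdub
      have e : (2 * l + 1 + 1) / 2 = l + 1 := by omega
      rw [e]; exact hzc _ (by omega) le_rfl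
    have hj := haL j h1 h3
    have h1' := haL 1 le_rfl (by omega)
    have hp := hpair 1 le_rfl (by omega)
    have d1 := hdist 1 (by omega) (2 * l + 1) (by omega) (by omega)
    have d2 := hdist 2 (by omega) (2 * l + 1) (by omega) (by omega)
    have := hα j h1 h3
    norm_num at hp
    push_cast at *
    omega
  -- the counting function
  obtain ⟨u, hu⟩ : ∃ u : ℕ → ℕ, ∀ p, u p =
      ((Finset.Icc 1 (2 * l)).filter (fun j => a j < a p)).card := ⟨_, fun _ => rfl⟩
  have hrank : ∀ p, 1 ≤ p → p ≤ n →
      ((Finset.Icc 1 n).filter (fun j => a p ≤ a j)).card = σ p := by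
    intro p h1 h3
    have hp := hσbij.mapsTo (show p ∈ Set.Icc 1 n from ⟨h1, h3⟩)
    have hinj : Set.InjOn σ ((Finset.Icc 1 n).filter (fun j => a p ≤ a j) : Finset ℕ) := by
      intro x hx y hy hxy
      simp only [Finset.coe_filter, Finset.mem_Icc, Set.mem_setOf_eq] at hx hy
      exact hσbij.injOn hx.1 hy.1 hxy
    rw [← Finset.card_image_of_injOn hinj]
    have : ((Finset.Icc 1 n).filter (fun j => a p ≤ a j)).image σ = Finset.Icc 1 (σ p) := by
      ext y
      simp only [Finset.mem_image, Finset.mem_filter, Finset.mem_Icc]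
      constructor
      · rintro ⟨x, ⟨hx, hax⟩, rfl⟩
        have hx' := hσbij.mapsTo (show x ∈ Set.Icc 1 n from hx)
        refine ⟨hx'.1, ?_⟩
        have := hσ p ⟨h1, h3⟩ x hx
        by_contra hc
        exact absurd (this.1 (not_le.1 hc)) (not_lt.2 hax)
      · rintro ⟨hy1, hy2⟩
        obtain ⟨x, hx, rfl⟩ := hσbij.surjOn (show y ∈ Set.Icc 1 n from ⟨hy1, hy2.trans hp.2⟩)
        refine ⟨x, ⟨hx, ?_⟩, rfl⟩
        have := hσ p ⟨h1, h3⟩ x hx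
        by_contra hc
        exact absurd (this.2 (not_le.1 hc)) (not_lt.2 hy2)
    rw [this, Nat.card_Icc]; omega
  have hsum : ∀ p, 2 * l < p → p ≤ n → σ p + u p = p := by
    intro p h1 h3
    rw [← hrank p (by omega) h3, hu, ← Finset.card_union_of_disjoint]
    · have : ((Finset.Icc 1 n).filter (fun j => a p ≤ a j)) ∪
          ((Finset.Icc 1 (2 * l)).filter (fun j => a j < a p)) = Finset.Icc 1 p := by
        ext j
        simp only [Finset.mem_union, Finset.mem_filter, Finset.mem_Icc]
        constructor
        · rintro (⟨hj, hj'⟩ | ⟨hj, hj'⟩)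
          · refine ⟨hj.1, ?_⟩
            by_contra hc
            have := haD p j h1 (by omega) hj.2
            omega
          · omega
        · rintro ⟨hj1, hj2⟩
          by_cases hc : a p ≤ a j
          · left; exact ⟨⟨hj1, by omega⟩, hc⟩
          · right
            refine ⟨⟨hj1, ?_⟩, by omega⟩
            by_contra hc2
            rcases hj2.lt_or_eq with h | h
            · have := haD j p (by omega) h h3
              omega
            · subst h; exact hc le_rfl
      rw [this, Nat.card_Icc]; omega
    · rw [Finset.disjoint_left]
      intro j hj hj'
      simp only [Finset.mem_filter] at hj hj'
      omega
  have heven : ∀ p, 2 * l < p → p ≤ n → Even (u p) := by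
    intro p h1 h3
    rw [hu]
    apply even_card_aux
    intro k hk1 hk2
    have := hpair k hk1 hk2
    have d1 := hdist (2 * k - 1) (by omega) p (by omega) (by omega)
    have d2 := hdist (2 * k) (by omega) p (by omega) (by omega)
    omega
  have hu1 : u (2 * l + 1) = 2 * l := by
    rw [hu, Finset.filter_true_of_mem, Nat.card_Icc]
    · omega
    · intro j hj
      rw [Finset.mem_Icc] at hj
      exact htop j hj.1 hj.2
  have hmono : ∀ p, 2 * l < p → p + 1 ≤ n → u (p + 1) ≤ u p := by
    intro p h1 h3
    rw [hu, hu]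
    apply Finset.card_le_card
    intro j hj
    simp only [Finset.mem_filter] at hj ⊢
    exact ⟨hj.1, hj.2.trans (haD p (p + 1) h1 (by omega) h3)⟩
  have hgap : ∀ p, 2 * l < p → p + 1 ≤ n →
      (u p : ℤ) ≤ u (p + 1) + (zdub z p - zdub z (p + 1)) := by
    intro p h1 h3
    have hab := haD p (p + 1) h1 (by omega) h3
    have hsub : (Finset.Icc 1 (2 * l)).filter (fun j => a j < a p) ⊆
        (Finset.Icc 1 (2 * l)).filter (fun j => a j < a (p + 1)) ∪
        (Finset.Icc 1 (2 * l)).filter (fun j => a (p + 1) < a j ∧ a j < a p) := by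
      intro j hj
      simp only [Finset.mem_union, Finset.mem_filter, Finset.mem_Icc] at hj ⊢
      have := hdist j (by omega) (p + 1) (by omega) (by omega)
      omega
    have h4 := (Finset.card_le_card hsub).trans (Finset.card_union_le _ _)
    have h5 : ((Finset.Icc 1 (2 * l)).filter (fun j => a (p + 1) < a j ∧ a j < a p)).card
        ≤ (Finset.Ioo (a (p + 1)) (a p)).card := by
      apply Finset.card_le_card_of_injOn a
      · intro j hj
        simp only [Finset.coe_filter, Set.mem_setOf_eq] at hj
        simp only [Finset.coe_Ioo, Set.mem_Ioo]
        exact hj.2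
      · intro x hx y hy hxy
        simp only [Finset.coe_filter, Finset.mem_Icc, Set.mem_setOf_eq] at hx hy
        by_contra hne
        exact hdist x (by omega) y (by omega) hne hxy
    rw [Int.card_Ioo] at h5
    rw [← hu, ← hu] at h4
    have e1 := haR p h1 (by omega)
    have e2 := haR (p + 1) (by omega) h3
    push_cast at e2
    omega
  have hut : ∀ i, 1 ≤ i → i ≤ n - 2 * l → 2 * l + i - σ (2 * l + i) = u (2 * l + i) := by
    intro i h1 h3
    have := hsum (2 * l + i) (by omega) (by omega)
    omega
  refine ⟨?_, ?_, ?_⟩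
  · have := hsum (2 * l + 1) (by omega) (by omega)
    omega
  · intro i h1 h3
    refine ⟨?_, ?_⟩
    · have := hsum (2 * l + i) (by omega) (by omega)
      omega
    · rw [hut i h1 h3]; exact heven _ (by omega) (by omega)
  · refine ⟨?_, ?_, ?_, ?_, ?_⟩
    · dsimp only
      rw [if_pos ⟨le_rfl, by omega⟩, hut 1 le_rfl (by omega), hu1]
      omega
    · intro i h1 h3
      dsimp only
      rw [if_pos ⟨by omega, by omega⟩, if_pos ⟨by omega, by omega⟩,
        hut i h1 (by omega), hut (i + 1) (by omega) (by omega)]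
      have := hmono (2 * l + i) (by omega) (by omega)
      rw [add_assoc] at this
      omega
    · intro i h1 h3
      dsimp only
      rw [if_pos ⟨h1, h3⟩]
      exact Int.natCast_nonneg _
    · intro i h
      dsimp only
      rw [if_neg (by omega)]
    · intro i h1 h3
      dsimp only
      rw [if_pos ⟨by omega, by omega⟩, if_pos ⟨by omega, by omega⟩,
        hut i h1 (by omega), hut (i + 1) (by omega) (by omega)]
      have := hgap (2 * l + i) (by omega) (by omega)
      obtain ⟨c, hc⟩ := heven (2 * l + i) (by omega) (by omega)
      obtain ⟨d, hd⟩ := heven (2 * l + (i + 1)) (by omega) (by omega)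
      rw [add_assoc (2 * l) i 1] at this ⊢
      rw [hc, hd] at this ⊢
      have e1 : (c + c) / 2 = c := by omega
      have e2 : (d + d) / 2 = d := by omega
      rw [e1, e2]
      push_cast at this
      linarith
end

section
/- Let n ≥ 0 and 0 ≤ r ≤ n, and let σ be a permutation of {1,...,n} such that σ(1) < σ(2) < ... < σ(r) and σ(r+1) < σ(r+2) < ... < σ(n). Then the number of inversions of σ, i.e. #{(x,y) : 1 ≤ x < y ≤ n and σ(x) > σ(y)}, equals Σ_{i=1}^{n−r} (r + i − σ(r+i)). -/
/-- Counting the cohomological degree in Bott's theorem: if a permutation `σ` of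
`{1,…,n}` (here realized 0-indexed on `Fin n`) is increasing on the first `r`
positions and on the remaining `n - r` positions, then its number of inversions
equals `Σ_{i=1}^{n-r} (r + i - σ(r+i))`, i.e. the sum of `j - σ(j)` over the last
`n - r` positions. -/
theorem inversions_of_shuffle (n r : ℕ) (hr : r ≤ n) (σ : Equiv.Perm (Fin n))
    (h1 : ∀ i j : Fin n, i < j → (j : ℕ) < r → σ i < σ j)
    (h2 : ∀ i j : Fin n, r ≤ (i : ℕ) → i < j → σ i < σ j) :
    ((Finset.univ.filter fun p : Fin n × Fin n => p.1 < p.2 ∧ σ p.2 < σ p.1).card : ℤ) =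
      ∑ j ∈ Finset.univ.filter (fun j : Fin n => r ≤ (j : ℕ)),
        (((j : ℕ) : ℤ) - ((σ j : ℕ) : ℤ)) := by
  classical
  have key : ∀ j : Fin n, r ≤ (j : ℕ) →
      ((Finset.univ.filter fun x : Fin n => x < j ∧ σ j < σ x).card : ℤ) =
        ((j : ℕ) : ℤ) - ((σ j : ℕ) : ℤ) := by
    intro j hj
    have e1 : (Finset.univ.filter fun x : Fin n => σ x < σ j).card = (σ j : ℕ) := by
      have : (Finset.univ.filter fun x : Fin n => σ x < σ j)
          = (Finset.Iio (σ j)).map σ.symm.toEmbedding := by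
        ext x
        simp
      rw [this, Finset.card_map, Fin.card_Iio]
    have e2 : Finset.Iio j = (Finset.univ.filter fun x : Fin n => x < j ∧ σ j < σ x) ∪
        (Finset.univ.filter fun x : Fin n => σ x < σ j) := by
      ext x
      simp only [Finset.mem_Iio, Finset.mem_union, Finset.mem_filter, Finset.mem_univ, true_and]
      constructor
      · intro hx
        rcases lt_trichotomy (σ x) (σ j) with h | h | h
        · exact Or.inr h
        · exact absurd (σ.injective h) hx.ne
        · exact Or.inl ⟨hx, h⟩
      · rintro (h | h)
        · exact h.1
        · rcases lt_trichotomy x j with h' | h' | h'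
          · exact h'
          · subst h'
            exact absurd h (lt_irrefl _)
          · exact absurd h (h2 j x hj h').not_gt
    have e3 : Disjoint (Finset.univ.filter fun x : Fin n => x < j ∧ σ j < σ x)
        (Finset.univ.filter fun x : Fin n => σ x < σ j) := by
      rw [Finset.disjoint_filter]
      intro x _ h
      exact h.2.not_gt
    have e4 := congrArg Finset.card e2
    rw [Finset.card_union_of_disjoint e3, e1, Fin.card_Iio] at e4
    omega
  rw [Finset.card_eq_sum_card_fiberwise (f := Prod.snd)
    (t := Finset.univ.filter (fun j : Fin n => r ≤ (j : ℕ)))]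
  · push_cast
    refine Finset.sum_congr rfl fun j hj => ?_
    rw [← key j (by simpa using hj)]
    congr 1
    refine Finset.card_bij' (fun p _ => p.1) (fun x _ => (x, j)) ?_ ?_ ?_ ?_
    · rintro ⟨a, b⟩ h
      simp only [Finset.mem_filter, Finset.mem_univ, true_and] at h ⊢
      obtain ⟨h, rfl⟩ := h
      exact h
    · intro x h
      simpa using h
    · rintro ⟨a, b⟩ h
      simp only [Finset.mem_filter, Finset.mem_univ, true_and] at h ⊢
      rw [h.2]
    · intro x h
      rfl
  · rintro ⟨a, b⟩ h
    simp only [Finset.coe_filter, Finset.mem_univ, true_and, Set.mem_setOf_eq] at h ⊢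
    by_contra hb
    exact absurd h.2 (h1 a b h.1 (not_le.mp hb)).not_gt
end

section
/- Let n ≥ 2, m = ⌊n/2⌋, and fix integers k, d with 1 ≤ k ≤ m and d ≥ 1. Then Z_k^{(d)} ⊆ Z_k^d and Z_k^{(d)} ⊆ Z_k^{(d+1)}. (These inclusions imply that for each j the induced maps Ext^j_S(S/I_{2k}^{(d)}, S) → Ext^j_S(S/I_{2k}^{d}, S) and Ext^j_S(S/I_{2k}^{(d)}, S) → Ext^j_S(S/I_{2k}^{(d+1)}, S) are injective.) -/
/-- The set `𝒵_k^d` indexing the subquotients of `S/I_{2k}^d`: pairs `(z,l)` with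
`z ∈ P(m)`, `0 ≤ l ≤ k-1`, `z₁ = ⋯ = z_{l+1} ≤ d-1`, and
`|z| + (d-z₁)l + 1 ≤ kd ≤ |z| + (d-z₁)(l+1)`. -/
def Zkd (m k d : ℕ) : Set ((ℕ → ℤ) × ℕ) :=
  { w | IsPart m w.1 ∧ w.2 < k ∧
    (∀ i, 1 ≤ i → i ≤ w.2 + 1 → w.1 i = w.1 1) ∧ w.1 1 ≤ (d : ℤ) - 1 ∧
    psize m w.1 + ((d : ℤ) - w.1 1) * (w.2 : ℤ) + 1 ≤ (k : ℤ) * (d : ℤ) ∧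
    (k : ℤ) * (d : ℤ) ≤ psize m w.1 + ((d : ℤ) - w.1 1) * ((w.2 : ℤ) + 1) }


/-- The set `𝒵_k^{(d)}` indexing the subquotients of `S/I_{2k}^{(d)}`: pairs `(z,k-1)`
with `z ∈ P(m)`, `z₁ = ⋯ = z_k`, and `z_k + z_{k+1} + ⋯ + z_m ≤ d-1`. -/
def Zsym (m k d : ℕ) : Set ((ℕ → ℤ) × ℕ) :=
  { w | IsPart m w.1 ∧ w.2 = k - 1 ∧ (∀ i, 1 ≤ i → i ≤ k → w.1 i = w.1 1) ∧
    (∑ i ∈ Finset.Icc k m, w.1 i) ≤ (d : ℤ) - 1 }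

/-- Theorem G (combinatorial form): `𝒵_k^{(d)} ⊆ 𝒵_k^d` and `𝒵_k^{(d)} ⊆ 𝒵_k^{(d+1)}`;
these inclusions imply that the induced maps
`Ext^j_S(S/I_{2k}^{(d)}, S) → Ext^j_S(S/I_{2k}^d, S)` and
`Ext^j_S(S/I_{2k}^{(d)}, S) → Ext^j_S(S/I_{2k}^{(d+1)}, S)` are injective. -/
theorem Zsym_subsets (n m k d : ℕ) (h2 : 2 ≤ n) (hm : m = n / 2) (hk1 : 1 ≤ k)
    (hkm : k ≤ m) (hd : 1 ≤ d) :
    Zsym m k d ⊆ Zkd m k d ∧ Zsym m k d ⊆ Zsym m k (d + 1) := by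
  constructor
  · rintro ⟨z, l⟩ ⟨hp, hl, he, hs⟩
    simp only at hp hl he hs
    obtain ⟨r, rfl⟩ : ∃ r, k = r + 1 := ⟨k - 1, by omega⟩
    have hlr : l = r := by omega
    subst hlr
    have hz : z 1 ≤ ∑ i ∈ Finset.Icc (l + 1) m, z i := by
      rw [← he (l + 1) (by omega) le_rfl]
      apply Finset.single_le_sum (f := z)
      · intro i hi
        rw [Finset.mem_Icc] at hi
        exact hp.2.1 i (by omega) hi.2
      · rw [Finset.mem_Icc]
        omega
    have hsize : psize m z = l * z 1 + ∑ i ∈ Finset.Icc (l + 1) m, z i := by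
      have hd' : Disjoint (Finset.Icc 1 l) (Finset.Icc (l + 1) m) := by
        rw [Finset.disjoint_left]
        intro i hi hj
        rw [Finset.mem_Icc] at hi hj
        omega
      have hu : Finset.Icc 1 m = Finset.Icc 1 l ∪ Finset.Icc (l + 1) m := by
        ext i
        simp only [Finset.mem_union, Finset.mem_Icc]
        omega
      have hc : ∑ i ∈ Finset.Icc 1 l, z i = ∑ i ∈ Finset.Icc 1 l, z 1 := by
        apply Finset.sum_congr rfl
        intro i hi
        rw [Finset.mem_Icc] at hi
        exact he i hi.1 (by omega)
      rw [psize, hu, Finset.sum_union hd', hc]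
      simp
    refine ⟨hp, ?_, he, ?_, ?_, ?_⟩
    · simp
    · simp only
      linarith
    · simp only [hsize]
      push_cast
      linarith
    · simp only [hsize]
      push_cast
      linarith
  · rintro w ⟨hp, hl, he, hs⟩
    refine ⟨hp, hl, he, ?_⟩
    push_cast
    linarith
end
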